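/- arXiv:1503.08544 — 2 statements merged into one kernel-verified Lean document; each statement's English description precedes it below -/
import Mathlib

section
/- Let f : ℝ² → ℝ² be a C^∞ map with f(0)=0 of the form f = (x, xy + y⁵ + Σ_{i+j≥6} a_{ij} x^i y^j). Then a_{07} − (5/8)a_{06}² ≠ 0 if and only if f is A-equivalent to (x,y) ↦ (x, xy + y⁵ + εy⁷) for some ε ∈ {1, −1} (the butterfly), and a_{07} − (5/8)a_{06}² = 0 if and only if f is A-equivalent to (x,y) ↦ (x, xy + y⁵) (the elder butterfly). -/
open Filter Topology

noncomputable section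

/-- Directional derivative of a scalar function. -/
def dop (v : ℝ × ℝ) (g : ℝ × ℝ → ℝ) : ℝ × ℝ → ℝ :=
  fun p => fderiv ℝ g p v

/-- Partial derivative operator in the first coordinate. -/
def pdx : (ℝ × ℝ → ℝ) → ℝ × ℝ → ℝ := dop (1, 0)

/-- Partial derivative operator in the second coordinate. -/
def pdy : (ℝ × ℝ → ℝ) → ℝ × ℝ → ℝ := dop (0, 1)

/-- Taylor coefficient `a_{ij} = ∂_x^i ∂_y^j g(0,0) / (i! j!)` of `g` at the origin. -/
def tcoeff (g : ℝ × ℝ → ℝ) (i j : ℕ) : ℝ :=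
  (pdx^[i] (pdy^[j] g)) 0 / (Nat.factorial i * Nat.factorial j)

/-- The Jacobian determinant `λ_f` of a map `f : ℝ² → ℝ²`. -/
def jacDet (f : ℝ × ℝ → ℝ × ℝ) (p : ℝ × ℝ) : ℝ :=
  (fderiv ℝ f p (1, 0)).1 * (fderiv ℝ f p (0, 1)).2 -
    (fderiv ℝ f p (1, 0)).2 * (fderiv ℝ f p (0, 1)).1

/-- `f` has corank one at `0` : the derivative of `f` at `0` has rank one. -/
def CorankOne (f : ℝ × ℝ → ℝ × ℝ) : Prop :=
  LinearMap.rank ((fderiv ℝ f 0).toLinearMap) = 1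

/-- `η` is a null vector field for `f` near `0`. -/
def IsNullVF (f η : ℝ × ℝ → ℝ × ℝ) : Prop :=
  η 0 ≠ 0 ∧ ∃ U ∈ 𝓝 (0 : ℝ × ℝ),
    ContDiffOn ℝ (⊤ : ℕ∞) η U ∧ ∀ p ∈ U, jacDet f p = 0 → fderiv ℝ f p (η p) = 0

/-- The derivative `(ηg)(p) = Dg(p)(η(p))` of `g` along the vector field `η`. -/
def etaD (η : ℝ × ℝ → ℝ × ℝ) (g : ℝ × ℝ → ℝ) : ℝ × ℝ → ℝ :=
  fun p => fderiv ℝ g p (η p)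

/-- The iterated derivative `η^k g` along the vector field `η`. -/
def etaIter (η : ℝ × ℝ → ℝ × ℝ) : ℕ → (ℝ × ℝ → ℝ) → ℝ × ℝ → ℝ
  | 0, g => g
  | k + 1, g => etaD η (etaIter η k g)

/-- The Hessian matrix of second partial derivatives of `g` at `0`. -/
def hess (g : ℝ × ℝ → ℝ) : Matrix (Fin 2) (Fin 2) ℝ :=
  !![pdx (pdx g) 0, pdx (pdy g) 0; pdy (pdx g) 0, pdy (pdy g) 0]

/-- `A^r`-equivalence of the `r`-jets at `0` of two map-germs `(ℝ²,0) → (ℝ²,0)`. -/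
def JetEquiv (r : ℕ) (f g : ℝ × ℝ → ℝ × ℝ) : Prop :=
  ∃ φ ψ : ℝ × ℝ → ℝ × ℝ,
    ContDiff ℝ (⊤ : ℕ∞) φ ∧ ContDiff ℝ (⊤ : ℕ∞) ψ ∧ φ 0 = 0 ∧ ψ 0 = 0 ∧
    Function.Bijective (⇑(fderiv ℝ φ 0)) ∧ Function.Bijective (⇑(fderiv ℝ ψ 0)) ∧
    ∀ i ≤ r, iteratedFDeriv ℝ i (ψ ∘ f ∘ φ) 0 = iteratedFDeriv ℝ i g 0

/-- `A`-equivalence of two map-germs `(ℝ²,0) → (ℝ²,0)`. -/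
def AEquiv (f g : ℝ × ℝ → ℝ × ℝ) : Prop :=
  ∃ φ ψ : ℝ × ℝ → ℝ × ℝ,
    ContDiff ℝ (⊤ : ℕ∞) φ ∧ ContDiff ℝ (⊤ : ℕ∞) ψ ∧ φ 0 = 0 ∧ ψ 0 = 0 ∧
    Function.Bijective (⇑(fderiv ℝ φ 0)) ∧ Function.Bijective (⇑(fderiv ℝ ψ 0)) ∧
    ∀ᶠ p in 𝓝 (0 : ℝ × ℝ), ψ (f (φ p)) = g p

/-- `f` has the form `(x, g(x,y))` where `g` is `C^∞` and the Taylor coefficients of `g`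
of total degree `< N` at the origin are prescribed by `P`. -/
def HasForm (f : ℝ × ℝ → ℝ × ℝ) (g : ℝ × ℝ → ℝ) (N : ℕ) (P : ℕ → ℕ → ℝ) : Prop :=
  ContDiff ℝ (⊤ : ℕ∞) g ∧ (∀ p, f p = (p.1, g p)) ∧
    ∀ i j, i + j < N → tcoeff g i j = P i j

open scoped ContDiff

/-- Smoothness of integrals depending on parameters. -/
lemma contDiff_param_nat {E : Type} [NormedAddCommGroup E] [NormedSpace ℝ E]
    [FiniteDimensional ℝ E] (n : ℕ) :
    ∀ {V : Type} [NormedAddCommGroup V] [NormedSpace ℝ V] [CompleteSpace V] (F : E → ℝ → V),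
      ContDiff ℝ n (fun p : E × ℝ => F p.1 p.2) →
      ContDiff ℝ n (fun x => ∫ u in (0:ℝ)..1, F x u) := by
  induction n with
  | zero =>
    intro V _ _ _ F hF
    rw [Nat.cast_zero, contDiff_zero] at hF ⊢
    exact intervalIntegral.continuous_parametric_intervalIntegral_of_continuous' hF 0 1
  | succ n ih =>
    intro V _ _ _ F hF
    have hdF : ContDiff ℝ n (fun p : E × ℝ =>
        (fderiv ℝ (fun q : E × ℝ => F q.1 q.2) p).comp (ContinuousLinearMap.inl ℝ E ℝ)) := by
      have h1 : ContDiff ℝ n (fderiv ℝ (fun q : E × ℝ => F q.1 q.2)) :=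
        hF.fderiv_right (by norm_cast)
      exact h1.clm_comp contDiff_const
    have hd : ∀ x, HasFDerivAt (fun x => ∫ u in (0:ℝ)..1, F x u)
        (∫ u in (0:ℝ)..1, (fderiv ℝ (fun q : E × ℝ => F q.1 q.2) (x, u)).comp
          (ContinuousLinearMap.inl ℝ E ℝ)) x := by
      intro x₀
      have hc : Continuous (fun p : E × ℝ =>
        (fderiv ℝ (fun q : E × ℝ => F q.1 q.2) p).comp (ContinuousLinearMap.inl ℝ E ℝ)) :=
        hdF.continuous
      obtain ⟨C, hC⟩ := ((isCompact_closedBall x₀ 1).prod (isCompact_Icc (a := (0:ℝ)) (b := 1))).exists_bound_of_continuousOn hc.continuousOn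
      have hFc : Continuous (fun p : E × ℝ => F p.1 p.2) := hF.continuous
      refine (intervalIntegral.hasFDerivAt_integral_of_dominated_of_fderiv_le
        (F := F) (μ := MeasureTheory.volume) (s := Metric.ball x₀ 1) (bound := fun _ => C)
        (F' := fun x u => (fderiv ℝ (fun q : E × ℝ => F q.1 q.2) (x, u)).comp
          (ContinuousLinearMap.inl ℝ E ℝ))
        (Metric.ball_mem_nhds x₀ one_pos) ?_ ?_ ?_ ?_ ?_ ?_)
      · filter_upwards with x
        exact (hFc.comp (by fun_prop : Continuous fun u : ℝ => (x, u))).aestronglyMeasurable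
      · exact (hFc.comp (by fun_prop : Continuous fun u : ℝ => (x₀, u))).intervalIntegrable _ _
      · exact (hc.comp (by fun_prop : Continuous fun u : ℝ => (x₀, u))).aestronglyMeasurable
      · filter_upwards with u hu x hx
        rw [Set.uIoc_of_le zero_le_one] at hu
        exact hC (x, u) ⟨Metric.ball_subset_closedBall hx, hu.1.le, hu.2⟩
      · exact intervalIntegrable_const
      · filter_upwards with u hu x hx
        have h1 : HasFDerivAt (fun q : E × ℝ => F q.1 q.2)
          (fderiv ℝ (fun q : E × ℝ => F q.1 q.2) (x, u)) (x, u) :=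
          (hF.differentiable (by norm_cast) _).hasFDerivAt
        have h2 : HasFDerivAt (fun x : E => (x, u)) (ContinuousLinearMap.inl ℝ E ℝ) x :=
          hasFDerivAt_prodMk_left x u
        exact h1.comp x h2
    have := ih (fun x u => (fderiv ℝ (fun q : E × ℝ => F q.1 q.2) (x, u)).comp
          (ContinuousLinearMap.inl ℝ E ℝ)) hdF
    rw [Nat.cast_succ]
    rw [contDiff_succ_iff_fderiv]
    refine ⟨fun x => (hd x).differentiableAt, by simp, ?_⟩
    rw [funext fun x => (hd x).fderiv]
    exact this

lemma contDiff_param {E : Type} [NormedAddCommGroup E] [NormedSpace ℝ E]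
    [FiniteDimensional ℝ E]
    (F : E → ℝ → ℝ) (hF : ContDiff ℝ ∞ (fun p : E × ℝ => F p.1 p.2)) :
      ContDiff ℝ ∞ (fun x => ∫ u in (0:ℝ)..1, F x u) := by
  rw [contDiff_infty]
  intro n
  exact contDiff_param_nat n F (hF.of_le (by exact_mod_cast le_top))

/-- Hadamard's lemma with a parameter. -/
lemma hadamard2 (g : ℝ × ℝ → ℝ) (hg : ContDiff ℝ ∞ g) :
    ∃ g1 : ℝ × ℝ → ℝ, ContDiff ℝ ∞ g1 ∧ (∀ x y, g (x, y) = g (0, y) + x * g1 (x, y)) ∧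
      ∀ y, g1 (0, y) = fderiv ℝ g (0, y) (1, 0) := by
  refine ⟨fun p => ∫ u in (0:ℝ)..1, fderiv ℝ g (u * p.1, p.2) (1, 0), ?_, ?_, ?_⟩
  · apply contDiff_param (fun (p : ℝ × ℝ) u => fderiv ℝ g (u * p.1, p.2) (1, 0))
    have h1 : ContDiff ℝ ∞ (fderiv ℝ g) := hg.fderiv_right (by norm_cast)
    have h2 : ContDiff ℝ ∞ (fun q : (ℝ × ℝ) × ℝ => (q.2 * q.1.1, q.1.2)) := by fun_prop
    exact (h1.comp h2).clm_apply contDiff_const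
  · intro x y
    have hd : ∀ u ∈ Set.uIcc (0:ℝ) 1, HasDerivAt (fun u : ℝ => g (u * x, y))
        (x * fderiv ℝ g (u * x, y) (1, 0)) u := by
      intro u _
      have h1 : HasFDerivAt g (fderiv ℝ g (u * x, y)) (u * x, y) :=
        (hg.differentiable (by simp) _).hasFDerivAt
      have h2 : HasDerivAt (fun u : ℝ => (u * x, y)) (x, 0) u := by
        have h3 : HasDerivAt (fun u : ℝ => u * x) x u := by
          simpa using (hasDerivAt_id u).mul_const x
        exact h3.prodMk (hasDerivAt_const u y)
      have h4 := h1.comp_hasDerivAt u h2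
      have h5 : ((x : ℝ), (0 : ℝ)) = x • ((1 : ℝ), (0 : ℝ)) := by simp
      rw [h5, map_smul, smul_eq_mul] at h4
      exact h4
    have hcont : Continuous fun u : ℝ => x * fderiv ℝ g (u * x, y) (1, 0) := by
      have h1 : Continuous (fderiv ℝ g) := hg.continuous_fderiv (by simp)
      have h2 : Continuous (fun u : ℝ => (u * x, y)) := by fun_prop
      exact continuous_const.mul ((h1.comp h2).clm_apply continuous_const)
    have := intervalIntegral.integral_eq_sub_of_hasDerivAt hd (hcont.intervalIntegrable _ _)
    rw [intervalIntegral.integral_const_mul] at this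
    simp only [one_mul, zero_mul] at this
    linarith
  · intro y; simp

/-- Hadamard's lemma in one variable. -/
lemma hadamard1 (k : ℝ → ℝ) (hk : ContDiff ℝ ∞ k) :
    ∃ k1 : ℝ → ℝ, ContDiff ℝ ∞ k1 ∧ (∀ t, k t = k 0 + t * k1 t) := by
  obtain ⟨g1, h1, h2, -⟩ := hadamard2 (fun p => k p.1) (by fun_prop)
  exact ⟨fun t => g1 (t, 0), by fun_prop, fun t => h2 t 0⟩

/-- Globalisation of a smooth germ. -/
lemma globalize {E V : Type} [NormedAddCommGroup E] [NormedSpace ℝ E] [FiniteDimensional ℝ E]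
    [NormedAddCommGroup V] [NormedSpace ℝ V] (f : E → V) (a : E)
    (hf : ∀ᶠ x in 𝓝 a, ContDiffAt ℝ ∞ f x) :
    ∃ F : E → V, ContDiff ℝ ∞ F ∧ ∀ᶠ x in 𝓝 a, F x = f x := by
  obtain ⟨r, hr, hball⟩ := Metric.eventually_nhds_iff_ball.1 hf
  let b : ContDiffBump a := ⟨r / 4, r / 2, by positivity, by linarith⟩
  refine ⟨fun x => b x • f x, ?_, ?_⟩
  · rw [contDiff_iff_contDiffAt]
    intro x
    by_cases hx : x ∈ Metric.ball a r
    · exact b.contDiffAt.smul (hball x hx)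
    · have : (fun x => b x • f x) =ᶠ[𝓝 x] fun _ => 0 := by
        have hx' : x ∈ (Metric.closedBall a (r / 2))ᶜ := by
          simp only [Metric.mem_ball, not_lt, Set.mem_compl_iff, Metric.mem_closedBall, not_le] at *
          linarith
        filter_upwards [Metric.isClosed_closedBall.isOpen_compl.mem_nhds hx'] with y hy
        have : b y = 0 := by
          apply b.zero_of_le_dist
          simp only [Set.mem_compl_iff, Metric.mem_closedBall, not_le] at hy
          exact hy.le
        simp [this]
      exact contDiffAt_const.congr_of_eventuallyEq this
  · filter_upwards [Metric.ball_mem_nhds a (show (0:ℝ) < r / 4 by positivity)] with x hx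
    have : b x = 1 := b.one_of_mem_closedBall (Metric.ball_subset_closedBall hx)
    simp [this]

/-- Smooth inverse function theorem, with global representatives. -/
lemma smooth_inverse {E : Type} [NormedAddCommGroup E] [NormedSpace ℝ E] [FiniteDimensional ℝ E]
    (f : E → E) (a : E) (hf : ContDiff ℝ ∞ f)
    (hb : Function.Bijective (fderiv ℝ f a)) :
    ∃ θ : E → E, ContDiff ℝ ∞ θ ∧ θ (f a) = a ∧ (∀ᶠ x in 𝓝 a, θ (f x) = x) ∧
      (∀ᶠ y in 𝓝 (f a), f (θ y) = y) ∧ Function.Bijective (fderiv ℝ θ (f a)) ∧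
      (fderiv ℝ θ (f a)).comp (fderiv ℝ f a) = ContinuousLinearMap.id ℝ E := by
  have : CompleteSpace E := FiniteDimensional.complete ℝ E
  let L : E ≃L[ℝ] E := ContinuousLinearEquiv.ofBijective (fderiv ℝ f a)
    (LinearMap.ker_eq_bot.2 hb.1) (LinearMap.range_eq_top.2 hb.2)
  have hL : (L : E →L[ℝ] E) = fderiv ℝ f a := by ext; simp [L]
  have hd : HasFDerivAt f (L : E →L[ℝ] E) a := by
    rw [hL]; exact (hf.differentiable (by simp) a).hasFDerivAt
  let e := hf.contDiffAt.toOpenPartialHomeomorph f hd (by simp)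
  have he : ⇑e = f := rfl
  have hmem : a ∈ e.source := hf.contDiffAt.mem_toOpenPartialHomeomorph_source hd (by simp)
  have hinv : ∀ᶠ x in 𝓝 a, ∃ L' : E ≃L[ℝ] E, (L' : E →L[ℝ] E) = fderiv ℝ f x := by
    have hc : ContinuousAt (fderiv ℝ f) a := (hf.continuous_fderiv (by simp)).continuousAt
    have := hc.eventually (show ∀ᶠ T in 𝓝 (fderiv ℝ f a), T ∈ Set.range ((↑) : (E ≃L[ℝ] E) → (E →L[ℝ] E)) from by
      rw [← hL]; exact ContinuousLinearEquiv.nhds L)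
    filter_upwards [this] with x hx
    exact hx
  have htarget : f a ∈ e.target := e.map_source hmem
  have hsymma : e.symm (f a) = a := e.left_inv hmem
  have hsm : ∀ᶠ y in 𝓝 (f a), ContDiffAt ℝ ∞ e.symm y := by
    have hcs : ContinuousAt e.symm (f a) := e.continuousAt_symm htarget
    have h1 : ∀ᶠ y in 𝓝 (f a), ∃ L' : E ≃L[ℝ] E, (L' : E →L[ℝ] E) = fderiv ℝ f (e.symm y) := by
      rw [← hsymma] at hinv
      exact hcs.eventually hinv
    filter_upwards [h1, e.open_target.mem_nhds htarget] with y ⟨L', hL'⟩ hy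
    refine e.contDiffAt_symm (f₀' := L') hy ?_ hf.contDiffAt
    rw [hL']; exact (hf.differentiable (by simp) _).hasFDerivAt
  obtain ⟨θ, hθ, hθe⟩ := globalize e.symm (f a) hsm
  have hleft : ∀ᶠ x in 𝓝 a, θ (f x) = x := by
    filter_upwards [hf.continuous.continuousAt.eventually hθe, e.open_source.mem_nhds hmem] with x h1 h2
    rw [h1]; exact e.left_inv h2
  have hright : ∀ᶠ y in 𝓝 (f a), f (θ y) = y := by
    filter_upwards [hθe, e.open_target.mem_nhds htarget] with y h1 h2
    rw [h1]; exact e.right_inv h2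
  have hval : θ (f a) = a := by rw [hθe.self_of_nhds]; exact hsymma
  have hcomp : (fderiv ℝ θ (f a)).comp (fderiv ℝ f a) = ContinuousLinearMap.id ℝ E := by
    rw [← fderiv_comp a (hθ.differentiable (by simp) _) (hf.differentiable (by simp) _)]
    have : θ ∘ f =ᶠ[𝓝 a] id := hleft
    rw [this.fderiv_eq, fderiv_id]
  refine ⟨θ, hθ, hval, hleft, hright, ?_, hcomp⟩
  have h3 : ∀ v, fderiv ℝ θ (f a) (fderiv ℝ f a v) = v := fun v => by
    have := DFunLike.congr_fun hcomp v
    simpa using this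
  constructor
  · intro u v huv
    obtain ⟨u', rfl⟩ := hb.2 u
    obtain ⟨v', rfl⟩ := hb.2 v
    rw [h3, h3] at huv
    rw [huv]
  · intro v; exact ⟨_, h3 v⟩

/-- Smooth local reciprocal. -/
lemma smooth_recip {E : Type} [NormedAddCommGroup E] [NormedSpace ℝ E] [FiniteDimensional ℝ E]
    (m : E → ℝ) (a : E) (hm : ContDiff ℝ ∞ m) (h0 : m a ≠ 0) :
    ∃ N : E → ℝ, ContDiff ℝ ∞ N ∧ ∀ᶠ x in 𝓝 a, m x * N x = 1 := by
  have hne : ∀ᶠ x in 𝓝 a, m x ≠ 0 := hm.continuous.continuousAt.eventually_ne h0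
  obtain ⟨N, hN, hNe⟩ := globalize (fun x => (m x)⁻¹) a (by
    filter_upwards [hne] with x hx
    exact hm.contDiffAt.inv hx)
  refine ⟨N, hN, ?_⟩
  filter_upwards [hNe, hne] with x h1 h2
  rw [h1]; exact mul_inv_cancel₀ h2

/-- Smooth local fourth root. -/
lemma smooth_root4 (m : ℝ → ℝ) (hm : ContDiff ℝ ∞ m) (h0 : m 0 = 1) :
    ∃ w : ℝ → ℝ, ContDiff ℝ ∞ w ∧ w 0 = 1 ∧ ∀ᶠ x in 𝓝 (0:ℝ), w x ^ 4 = m x := by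
  have hne : ∀ᶠ x in 𝓝 (0:ℝ), 0 < m x :=
    hm.continuous.continuousAt.eventually_const_lt (by rw [h0]; norm_num)
  obtain ⟨w, hw, hwe⟩ := globalize (fun x => m x ^ ((1:ℝ)/4)) 0 (by
    filter_upwards [hne] with x hx
    exact hm.contDiffAt.rpow contDiffAt_const hx.ne')
  refine ⟨w, hw, ?_, ?_⟩
  · rw [hwe.self_of_nhds, h0]; simp
  · filter_upwards [hwe, hne] with x h1 h2
    rw [h1, ← Real.rpow_natCast, ← Real.rpow_mul h2.le]; norm_num

lemma contDiff_deriv_infty {k : ℝ → ℝ} (hk : ContDiff ℝ ∞ k) : ContDiff ℝ ∞ (deriv k) :=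
  (contDiff_infty_iff_deriv.1 hk).2

/-- Taylor expansion with smooth remainder. -/
lemma taylor1 (n : ℕ) : ∀ (k : ℝ → ℝ), ContDiff ℝ ∞ k →
    ∃ r : ℝ → ℝ, ContDiff ℝ ∞ r ∧
      ∀ t, k t = (∑ i ∈ Finset.range n, iteratedDeriv i k 0 / (Nat.factorial i) * t ^ i) + t ^ n * r t := by
  induction n with
  | zero => intro k hk; exact ⟨k, hk, fun t => by simp⟩
  | succ n ih =>
    intro k hk
    obtain ⟨r, hr, hk'⟩ := ih (deriv k) (contDiff_deriv_infty hk)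
    refine ⟨fun t => ∫ u in (0:ℝ)..1, u ^ n * r (u * t), ?_, ?_⟩
    · apply contDiff_param (fun (t : ℝ) u => u ^ n * r (u * t))
      fun_prop
    · intro t
      have hd : ∀ u ∈ Set.uIcc (0:ℝ) 1, HasDerivAt (fun u : ℝ => k (u * t))
          (deriv k (u * t) * t) u := by
        intro u _
        have h1 : HasDerivAt k (deriv k (u * t)) (u * t) :=
          (hk.differentiable (by simp) _).hasDerivAt
        have h3 : HasDerivAt (fun u : ℝ => u * t) t u := by
          simpa using (hasDerivAt_id u).mul_const t
        exact h1.comp u h3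
      have hcont : Continuous fun u : ℝ => deriv k (u * t) * t := by
        have h1 : Continuous (deriv k) := (contDiff_deriv_infty hk).continuous
        fun_prop
      have h := intervalIntegral.integral_eq_sub_of_hasDerivAt hd (hcont.intervalIntegrable _ _)
      simp only [one_mul, zero_mul] at h
      have e1 : ∀ u : ℝ, deriv k (u * t) * t =
          (∑ i ∈ Finset.range n, (iteratedDeriv (i+1) k 0 / (Nat.factorial i) * t ^ (i+1)) * u ^ i)
            + t ^ (n+1) * (u ^ n * r (u * t)) := by
        intro u
        rw [hk' (u * t), add_mul, Finset.sum_mul]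
        congr 1
        · apply Finset.sum_congr rfl; intro i _
          rw [iteratedDeriv_succ']; ring
        · ring
      simp_rw [e1] at h
      have hrc : Continuous r := hr.continuous
      rw [intervalIntegral.integral_add, intervalIntegral.integral_finsetSum,
        intervalIntegral.integral_const_mul] at h
      · rw [Finset.sum_range_succ']
        simp only [iteratedDeriv_zero, Nat.factorial_zero, Nat.cast_one, div_one, pow_zero, mul_one]
        have e2 : ∀ i ∈ Finset.range n, ∫ u in (0:ℝ)..1,
            (iteratedDeriv (i+1) k 0 / (Nat.factorial i) * t ^ (i+1)) * u ^ i =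
            iteratedDeriv (i+1) k 0 / (Nat.factorial (i+1)) * t ^ (i+1) := by
          intro i _
          rw [intervalIntegral.integral_const_mul, integral_pow, Nat.factorial_succ]
          push_cast
          have : (Nat.factorial i : ℝ) ≠ 0 := by positivity
          field_simp
          simp
        rw [Finset.sum_congr rfl e2] at h
        linarith
      · intro i _
        apply Continuous.intervalIntegrable; fun_prop
      · apply Continuous.intervalIntegrable; fun_prop
      · apply Continuous.intervalIntegrable; fun_prop

/-- Borel's lemma: every formal power series is a Taylor series. -/
lemma borel_series (c : ℕ → ℝ) : ∃ E : ℝ → ℝ, ContDiff ℝ ∞ E ∧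
    ∀ i, iteratedDeriv i E 0 = Nat.factorial i * c i := by
  let χ : ContDiffBump (0:ℝ) := ⟨1, 2, by norm_num, by norm_num⟩
  let φ : ℕ → ℝ → ℝ := fun n s => s ^ n * χ s
  have hφ : ∀ n, ContDiff ℝ ∞ (φ n) := fun n => (contDiff_id.pow n).mul χ.contDiff
  have hφc : ∀ n, HasCompactSupport (φ n) := fun n => χ.hasCompactSupport.mul_left
  have hM : ∀ n k, ∃ M : ℝ, 0 ≤ M ∧ ∀ s, ‖iteratedDeriv k (φ n) s‖ ≤ M := by
    intro n k
    have hc : Continuous (iteratedFDeriv ℝ k (φ n)) :=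
      (hφ n).continuous_iteratedFDeriv (by exact_mod_cast le_top)
    obtain ⟨M, hM⟩ := hc.bounded_above_of_compact_support ((hφc n).iteratedFDeriv k)
    refine ⟨M, (norm_nonneg _).trans (hM 0), fun s => ?_⟩
    rw [← norm_iteratedFDeriv_eq_norm_iteratedDeriv]
    exact hM s
  choose M hM0 hM using hM
  let l : ℕ → ℝ := fun n => 1 + 2 ^ n * |c n| * ∑ k ∈ Finset.range n, M n k
  have hl1 : ∀ n, 1 ≤ l n := fun n => by
    have : 0 ≤ ∑ k ∈ Finset.range n, M n k := Finset.sum_nonneg fun k _ => hM0 n k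
    have : 0 ≤ 2 ^ n * |c n| * ∑ k ∈ Finset.range n, M n k := by positivity
    simp only [l]; linarith
  let f : ℕ → ℝ → ℝ := fun n s => c n * (l n)⁻¹ ^ n * φ n (l n * s)
  have hf : ∀ n, ContDiff ℝ ∞ (f n) := fun n =>
    contDiff_const.mul ((hφ n).comp (contDiff_const.mul contDiff_id))
  have hder : ∀ n k s, iteratedDeriv k (f n) s =
      c n * (l n)⁻¹ ^ n * ((l n) ^ k * iteratedDeriv k (φ n) (l n * s)) := by
    intro n k s
    have h1 : ContDiff ℝ k (φ n) := (hφ n).of_le (by exact_mod_cast le_top)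
    have h2 : ContDiff ℝ k (fun s => φ n (l n * s)) := h1.comp (contDiff_const.mul contDiff_id)
    have h3 := iteratedDeriv_const_mul (n := k) (x := s) (c n * (l n)⁻¹ ^ n) h2.contDiffAt
    simp only [f]
    rw [h3]
    rw [iteratedDeriv_comp_const_mul h1]
  let v : ℕ → ℕ → ℝ := fun k n => (1/2) ^ n + if n ≤ k then |c n| * (l n)^k * M n k else 0
  have hv : ∀ k, Summable (v k) := by
    intro k
    apply Summable.add
    · exact summable_geometric_of_lt_one (by norm_num) (by norm_num)
    · apply summable_of_hasFiniteSupport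
      apply (Set.finite_Iic k).subset
      intro n hn
      by_contra h
      simp only [Set.mem_Iic] at h
      simp [h] at hn
  have hbd : ∀ k n s, ‖iteratedFDeriv ℝ k (f n) s‖ ≤ v k n := by
    intro k n s
    have hlpos : 0 < l n := lt_of_lt_of_le one_pos (hl1 n)
    rw [norm_iteratedFDeriv_eq_norm_iteratedDeriv, hder]
    have h1 := hM n k (l n * s)
    rw [norm_mul, norm_mul, norm_mul, norm_pow, norm_pow, norm_inv, Real.norm_of_nonneg hlpos.le,
      Real.norm_eq_abs]
    by_cases hk : n ≤ k
    · simp only [v, hk, if_true]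
      have h2 : (l n)⁻¹ ^ n ≤ 1 := pow_le_one₀ (by positivity) (inv_le_one_of_one_le₀ (hl1 n))
      have h3 : (0:ℝ) < (1/2)^n := by positivity
      calc |c n| * (l n)⁻¹ ^ n * (l n ^ k * ‖iteratedDeriv k (φ n) (l n * s)‖)
          ≤ |c n| * 1 * (l n ^ k * M n k) := by gcongr
        _ ≤ _ := by linarith
    · push Not at hk
      have hk' : ¬ n ≤ k := not_le.2 hk
      simp only [v, hk', if_false, add_zero]
      have h2 : (l n)⁻¹ ^ n * l n ^ k ≤ (l n)⁻¹ := by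
        obtain ⟨m, rfl⟩ : ∃ m, n = k + 1 + m := ⟨n - k - 1, by omega⟩
        set L := l (k+1+m)
        have : L⁻¹ ^ (k+1+m) * L ^ k = L⁻¹ * L⁻¹ ^ m := by
          rw [pow_add, pow_add, inv_pow]; field_simp
        rw [this]
        have h4 : L⁻¹ ^ m ≤ 1 := pow_le_one₀ (by positivity) (inv_le_one_of_one_le₀ (hl1 _))
        have h5 : 0 < L⁻¹ := by positivity
        nlinarith
      have h6 : M n k ≤ ∑ k ∈ Finset.range n, M n k :=
        Finset.single_le_sum (f := fun k => M n k) (fun k _ => hM0 n k) (Finset.mem_range.2 hk)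
      calc |c n| * (l n)⁻¹ ^ n * (l n ^ k * ‖iteratedDeriv k (φ n) (l n * s)‖)
          = |c n| * ((l n)⁻¹ ^ n * l n ^ k) * ‖iteratedDeriv k (φ n) (l n * s)‖ := by ring
        _ ≤ |c n| * (l n)⁻¹ * M n k := by gcongr
        _ = (|c n| * M n k) / l n := by ring
        _ ≤ (1/2)^n := by
          rw [div_le_iff₀ hlpos]
          have h7 : |c n| * M n k ≤ |c n| * ∑ k ∈ Finset.range n, M n k := by gcongr
          have h8 : (1/2:ℝ)^n * 2^n = 1 := by rw [← mul_pow]; norm_num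
          have h9 : (1/2:ℝ)^n * l n = (1/2)^n + |c n| * ∑ k ∈ Finset.range n, M n k := by
            simp only [l]
            linear_combination (|c n| * ∑ k ∈ Finset.range n, M n k) * h8
          have : (0:ℝ) < (1/2)^n := by positivity
          linarith
  refine ⟨fun s => ∑' n, f n s, ?_, ?_⟩
  · exact contDiff_tsum (N := ⊤) hf (fun k _ => hv k) (fun k n s _ => hbd k n s)
  · intro i
    have hloc : ∀ n, f n =ᶠ[𝓝 0] fun s => c n * s ^ n := by
      intro n
      have hlpos : 0 < l n := lt_of_lt_of_le one_pos (hl1 n)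
      have : ∀ᶠ s in 𝓝 (0:ℝ), l n * s ∈ Metric.closedBall (0:ℝ) 1 := by
        have hc : ContinuousAt (fun s : ℝ => l n * s) 0 := by fun_prop
        apply hc.eventually_mem
        simp only [mul_zero]
        exact Metric.closedBall_mem_nhds _ one_pos
      filter_upwards [this] with s hs
      have h1 : χ (l n * s) = 1 := χ.one_of_mem_closedBall hs
      simp only [f, φ, h1, mul_one, inv_pow, mul_pow]
      field_simp
    have hzero : ∀ n, iteratedDeriv i (f n) 0 = if n = i then Nat.factorial i * c i else 0 := by
      intro n
      rw [(hloc n).iteratedDeriv_eq i]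
      rw [iteratedDeriv_const_mul _ (by fun_prop)]
      rw [iteratedDeriv_eq_iterate, iter_deriv_pow]
      split_ifs with h
      · subst h
        have : (∏ i ∈ Finset.range n, ((n:ℝ) - i)) = Nat.factorial n := by
          rw [← Finset.prod_range_reflect, ← Finset.prod_range_add_one_eq_factorial]
          push_cast
          apply Finset.prod_congr rfl
          intro j hj
          rw [Finset.mem_range] at hj
          rw [Nat.cast_sub (by omega), Nat.cast_sub (by omega)]; push_cast; ring
        rw [this]; simp; ring
      · rcases lt_or_gt_of_ne h with h | h
        · have : (∏ j ∈ Finset.range i, ((n:ℝ) - j)) = 0 :=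
            Finset.prod_eq_zero (Finset.mem_range.2 h) (sub_self _)
          rw [this]; simp
        · rw [zero_pow (by omega)]; simp
    rw [iteratedDeriv_eq_iteratedFDeriv, iteratedFDeriv_tsum (N := ⊤) hf (fun k _ => hv k) (fun k n s _ => hbd k n s) le_top]
    simp only
    rw [tsum_eq_single i]
    · rw [← iteratedDeriv_eq_iteratedFDeriv, hzero]; simp
    · intro n hn
      rw [← norm_eq_zero, norm_iteratedFDeriv_eq_norm_iteratedDeriv, hzero]; simp [hn]

/-- Flat functions composed with the square root are smooth. -/
lemma flat_sqrt (n : ℕ) : ∀ (k : ℝ → ℝ), ContDiff ℝ ∞ k →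
    (∀ N, ∃ r : ℝ → ℝ, ContDiff ℝ ∞ r ∧ ∀ t, k t = t ^ N * r t) →
    ContDiff ℝ n (fun s => k (Real.sqrt s)) := by
  induction n with
  | zero =>
    intro k hk _
    rw [Nat.cast_zero, contDiff_zero]
    exact hk.continuous.comp Real.continuous_sqrt
  | succ n ih =>
    intro k hk hflat
    -- the function k' / (2 t)
    obtain ⟨r2, hr2, hkr2⟩ := hflat 2
    let k1 : ℝ → ℝ := fun t => r2 t + t * deriv r2 t / 2
    have hk1 : ContDiff ℝ ∞ k1 := by
      have := contDiff_deriv_infty hr2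
      simp only [k1]
      fun_prop
    have hder : ∀ t, HasDerivAt k (2 * t * k1 t) t := by
      intro t
      have h1 : HasDerivAt r2 (deriv r2 t) t := (hr2.differentiable (by simp) t).hasDerivAt
      have h2 : HasDerivAt (fun t => t ^ 2 * r2 t) (2 * t * r2 t + t ^ 2 * deriv r2 t) t := by
        have h3 := (hasDerivAt_pow 2 t).fun_mul h1
        simpa using h3
      rw [funext hkr2]
      convert h2 using 1
      simp only [k1]; ring
    have hk1flat : ∀ N, ∃ r : ℝ → ℝ, ContDiff ℝ ∞ r ∧ ∀ t, k1 t = t ^ N * r t := by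
      intro N
      obtain ⟨r, hr, hkr⟩ := hflat (N + 2)
      have hr' := contDiff_deriv_infty hr
      refine ⟨fun t => ((N + 2) * r t + t * deriv r t) / 2, by fun_prop, ?_⟩
      have hne : ∀ t, t ≠ 0 → k1 t = t ^ N * (((N + 2) * r t + t * deriv r t) / 2) := by
        intro t ht
        have h1 : HasDerivAt r (deriv r t) t := (hr.differentiable (by simp) t).hasDerivAt
        have h2 := (hasDerivAt_pow (N+2) t).fun_mul h1
        rw [← funext hkr] at h2
        have h4 := h2.unique (hder t)
        push_cast at h4
        apply mul_left_cancel₀ (mul_ne_zero two_ne_zero ht)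
        rw [← h4]; ring
      have hcl : Continuous (fun t => t ^ N * (((N + 2) * r t + t * deriv r t) / 2)) := by
        have := hr.continuous
        have := hr'.continuous
        fun_prop
      have := Continuous.ext_on (dense_compl_singleton (0:ℝ)) hk1.continuous hcl
        (fun t ht => hne t ht)
      exact fun t => congrFun this t
    have hd : ∀ s, HasDerivAt (fun s => k (Real.sqrt s)) (k1 (Real.sqrt s)) s := by
      intro s
      have hk0 : k 0 = 0 := by rw [hkr2]; simp
      have hk10 : k1 0 = 0 := by
        obtain ⟨r, -, h⟩ := hk1flat 1
        rw [h]; simp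
      rcases lt_trichotomy s 0 with hs | hs | hs
      · have : (fun s => k (Real.sqrt s)) =ᶠ[𝓝 s] fun _ => 0 := by
          filter_upwards [gt_mem_nhds hs] with x hx
          rw [Real.sqrt_eq_zero_of_nonpos hx.le, hk0]
        rw [Real.sqrt_eq_zero_of_nonpos hs.le, hk10]
        exact (hasDerivAt_const s (0:ℝ)).congr_of_eventuallyEq this
      · subst hs
        rw [Real.sqrt_zero, hk10]
        obtain ⟨r, hr, hkr⟩ := hflat 4
        rw [hasDerivAt_iff_isLittleO_nhds_zero]
        simp only [zero_add, Real.sqrt_zero, hk0, smul_zero, sub_zero]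
        have hb : (fun h : ℝ => r (Real.sqrt h)) =O[𝓝 0] (fun _ => (1:ℝ)) :=
          ((hr.continuous.comp Real.continuous_sqrt).tendsto 0).isBigO_one ℝ
        have hO : (fun h : ℝ => k (Real.sqrt h)) =O[𝓝 0] (fun h => h ^ 2) := by
          have h1 : (fun h : ℝ => (Real.sqrt h)^4) =O[𝓝 0] (fun h => h ^ 2) := by
            apply Asymptotics.IsBigO.of_bound 1
            filter_upwards with h
            rw [one_mul, Real.norm_eq_abs, Real.norm_eq_abs, abs_of_nonneg (by positivity), abs_of_nonneg (by positivity)]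
            rcases le_total 0 h with hh | hh
            · have := Real.sq_sqrt hh
              nlinarith
            · rw [Real.sqrt_eq_zero_of_nonpos hh]; simp; positivity
          have h2 := h1.mul hb
          simpa [← hkr] using h2
        exact hO.trans_isLittleO (Asymptotics.isLittleO_pow_id (by norm_num))
      · have h1 := (Real.hasDerivAt_sqrt hs.ne')
        have h2 := (hder (Real.sqrt s)).comp s h1
        have h3 : Real.sqrt s ≠ 0 := (Real.sqrt_pos.2 hs).ne'
        have h4 : k1 (Real.sqrt s) = 2 * Real.sqrt s * k1 (Real.sqrt s) * (1 / (2 * Real.sqrt s)) := by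
          field_simp
        rw [h4]
        exact h2
    rw [Nat.cast_succ, contDiff_succ_iff_deriv]
    refine ⟨fun s => (hd s).differentiableAt, by simp, ?_⟩
    rw [funext fun s => (hd s).deriv]
    exact ih k1 hk1 hk1flat

/-- Whitney's theorem on even functions. -/
lemma whitney_even (k : ℝ → ℝ) (hk : ContDiff ℝ ∞ k) (he : ∀ t, k (-t) = k t) :
    ∃ e : ℝ → ℝ, ContDiff ℝ ∞ e ∧ ∀ t, k t = e (t ^ 2) := by
  have step : ∀ k : {k : ℝ → ℝ // ContDiff ℝ ∞ k ∧ ∀ t, k (-t) = k t},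
      ∃ k' : {k : ℝ → ℝ // ContDiff ℝ ∞ k ∧ ∀ t, k (-t) = k t},
        ∀ t, k.1 t = k.1 0 + t ^ 2 * k'.1 t := by
    rintro ⟨k, hk, he⟩
    obtain ⟨k1, h1, hk1⟩ := hadamard1 k hk
    obtain ⟨k2, h2, hk2⟩ := hadamard1 k1 h1
    have hodd : ∀ t, t ≠ 0 → k1 (-t) = - k1 t := by
      intro t ht
      have := he t
      rw [hk1 (-t), hk1 t] at this
      apply mul_left_cancel₀ ht
      linarith
    have hodd' : ∀ t, k1 (-t) = - k1 t := by
      have := Continuous.ext_on (dense_compl_singleton (0:ℝ)) (f := fun t => k1 (-t)) (g := fun t => - k1 t)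
        (by have := h1.continuous; fun_prop) (by have := h1.continuous; fun_prop) (fun t ht => hodd t ht)
      exact fun t => congrFun this t
    have hk10 : k1 0 = 0 := by have := hodd' 0; simp at this; linarith
    have hev : ∀ t, k2 (-t) = k2 t := by
      have := Continuous.ext_on (dense_compl_singleton (0:ℝ)) (f := fun t => k2 (-t)) (g := fun t => k2 t)
        (by have := h2.continuous; fun_prop) (by have := h2.continuous; fun_prop) (fun t ht => by
          have := hodd' t
          rw [hk2 (-t), hk2 t, hk10] at this
          apply mul_left_cancel₀ (show t ≠ 0 from ht)
          simp only
          linarith)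
      exact fun t => congrFun this t
    refine ⟨⟨k2, h2, hev⟩, fun t => ?_⟩
    simp only
    rw [hk1 t, hk2 t, hk10]; ring
  choose next hnext using step
  let K : ℕ → {k : ℝ → ℝ // ContDiff ℝ ∞ k ∧ ∀ t, k (-t) = k t} := fun n => next^[n] ⟨k, hk, he⟩
  have hK : ∀ N t, k t = (∑ n ∈ Finset.range N, (K n).1 0 * (t ^ 2) ^ n) + (t ^ 2) ^ N * (K N).1 t := by
    intro N
    induction N with
    | zero => intro t; simp [K]
    | succ N ih =>
      intro t
      rw [ih t, Finset.sum_range_succ, hnext (K N) t]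
      have : K (N+1) = next (K N) := by simp only [K, Function.iterate_succ_apply']
      rw [this]; ring
  obtain ⟨E, hE, hEc⟩ := borel_series (fun n => (K n).1 0)
  have hflat : ∀ N, ∃ r : ℝ → ℝ, ContDiff ℝ ∞ r ∧ ∀ t, k t - E (t ^ 2) = t ^ N * r t := by
    intro N
    obtain ⟨r, hr, hEr⟩ := taylor1 N E hE
    have := (K N).2.1
    refine ⟨fun t => t ^ N * ((K N).1 t - r (t ^ 2)), by fun_prop, fun t => ?_⟩
    rw [hK N t, hEr]
    have : ∀ i ∈ Finset.range N, iteratedDeriv i E 0 / (Nat.factorial i) * (t ^ 2) ^ i =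
        (K i).1 0 * (t ^ 2) ^ i := by
      intro i _
      rw [hEc]
      have : (Nat.factorial i : ℝ) ≠ 0 := by positivity
      field_simp
    rw [Finset.sum_congr rfl this]; ring
  have hsm : ContDiff ℝ ∞ (fun s => (fun t => k t - E (t ^ 2)) (Real.sqrt s)) := by
    rw [contDiff_infty]
    intro n
    exact flat_sqrt n _ (by fun_prop) hflat
  refine ⟨fun s => (fun t => k t - E (t ^ 2)) (Real.sqrt s) + E s, hsm.add hE, fun t => ?_⟩
  simp only [Real.sqrt_sq_eq_abs, sq_abs, sub_add_cancel]
  rcases abs_choice t with h | h <;> rw [h]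
  exact (he t).symm

lemma whitney_split (k : ℝ → ℝ) (hk : ContDiff ℝ ∞ k) :
    ∃ a b : ℝ → ℝ, ContDiff ℝ ∞ a ∧ ContDiff ℝ ∞ b ∧ ∀ t, k t = a (t ^ 2) + t * b (t ^ 2) := by
  obtain ⟨a, ha, ha'⟩ := whitney_even (fun t => (k t + k (-t)) / 2) (by fun_prop)
    (fun t => by simp only [neg_neg]; ring)
  obtain ⟨o, ho, ho'⟩ := hadamard1 (fun t => (k t - k (-t)) / 2) (by fun_prop)
  have hev : ∀ t, o (-t) = o t := by
    have := Continuous.ext_on (dense_compl_singleton (0:ℝ)) (f := fun t => o (-t)) (g := fun t => o t)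
      (by have := ho.continuous; fun_prop) (by have := ho.continuous; fun_prop) (fun t ht => by
        have h1 := ho' t
        have h2 := ho' (-t)
        simp only [neg_neg, neg_zero, sub_self, zero_div, zero_add] at h1 h2
        apply mul_left_cancel₀ (show t ≠ 0 from ht)
        simp only
        linarith)
    exact fun t => congrFun this t
  obtain ⟨b, hb, hb'⟩ := whitney_even o ho hev
  refine ⟨a, b, ha, hb, fun t => ?_⟩
  rw [← ha', ← hb']
  have h1 := ho' t
  simp only [neg_zero, sub_self, zero_div, zero_add] at h1
  linarith

/-- Decomposition of a smooth function modulo fourth powers. -/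
lemma whitney_split4 (k : ℝ → ℝ) (hk : ContDiff ℝ ∞ k) :
    ∃ r0 r1 r2 r3 : ℝ → ℝ, ContDiff ℝ ∞ r0 ∧ ContDiff ℝ ∞ r1 ∧ ContDiff ℝ ∞ r2 ∧ ContDiff ℝ ∞ r3 ∧
      ∀ t, k t = r0 (t ^ 4) + t * r1 (t ^ 4) + t ^ 2 * r2 (t ^ 4) + t ^ 3 * r3 (t ^ 4) := by
  obtain ⟨a, b, ha, hb, h⟩ := whitney_split k hk
  obtain ⟨a0, a1, ha0, ha1, h1⟩ := whitney_split a ha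
  obtain ⟨b0, b1, hb0, hb1, h2⟩ := whitney_split b hb
  refine ⟨a0, b0, a1, b1, ha0, hb0, ha1, hb1, fun t => ?_⟩
  rw [h, h1, h2, show (t ^ 2) ^ 2 = t ^ 4 by ring]; ring

/-- Equivalence of plane curve germs (reparametrisation in the source, a diffeomorphism germ
with triangular linear part in the target). -/
def CEq (γ γ' : ℝ → ℝ × ℝ) : Prop :=
  ∃ (ψ : ℝ × ℝ → ℝ × ℝ) (τ : ℝ → ℝ), ContDiff ℝ ∞ ψ ∧ ContDiff ℝ ∞ τ ∧ ψ 0 = 0 ∧ τ 0 = 0 ∧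
    Function.Bijective (fderiv ℝ ψ 0) ∧ (fderiv ℝ ψ 0 (1, 0)).2 = 0 ∧ deriv τ 0 ≠ 0 ∧
    ∀ᶠ t in 𝓝 (0:ℝ), ψ (γ (τ t)) = γ' t

lemma inverse1 (τ : ℝ → ℝ) (hτ : ContDiff ℝ ∞ τ) (h0 : τ 0 = 0) (hd : deriv τ 0 ≠ 0) :
    ∃ θ : ℝ → ℝ, ContDiff ℝ ∞ θ ∧ θ 0 = 0 ∧ deriv θ 0 ≠ 0 ∧ (∀ᶠ t in 𝓝 (0:ℝ), θ (τ t) = t) ∧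
      (∀ᶠ t in 𝓝 (0:ℝ), τ (θ t) = t) := by
  have happ : ∀ v, fderiv ℝ τ 0 v = v * deriv τ 0 := by
    intro v
    rw [← fderiv_apply_one_eq_deriv]
    conv_lhs => rw [← mul_one v, ← smul_eq_mul, map_smul, smul_eq_mul]
  obtain ⟨θ, h1, h2, h3, h4, h5, h6⟩ := smooth_inverse τ 0 hτ (by
    constructor
    · intro u v huv
      rw [happ, happ] at huv
      exact mul_right_cancel₀ hd huv
    · intro v; exact ⟨v / deriv τ 0, by rw [happ]; field_simp⟩)
  rw [h0] at h2 h4 h5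
  refine ⟨θ, h1, h2, ?_, h3, h4⟩
  intro h
  have h7 : fderiv ℝ θ 0 1 = fderiv ℝ θ 0 0 := by
    rw [fderiv_apply_one_eq_deriv, h, map_zero]
  exact one_ne_zero (h5.1 h7)

lemma CEq.symm {γ γ' : ℝ → ℝ × ℝ} (hγ : Continuous γ) (h0 : γ 0 = 0) (h : CEq γ γ') :
    CEq γ' γ := by
  obtain ⟨ψ, τ, hψ, hτ, hψ0, hτ0, hb, ht, hd, he⟩ := h
  obtain ⟨θ, hθ, hθ0, hθd, hθ1, hθ2⟩ := inverse1 τ hτ hτ0 hd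
  obtain ⟨Ψ, h1, h2, h3, h4, h5, h6⟩ := smooth_inverse ψ 0 hψ hb
  rw [hψ0] at h2 h4 h5 h6
  refine ⟨Ψ, θ, h1, hθ, h2, hθ0, h5, ?_, hθd, ?_⟩
  · have h7 : fderiv ℝ Ψ 0 (fderiv ℝ ψ 0 (1, 0)) = (1, 0) := by
      simpa using DFunLike.congr_fun h6 (1, 0)
    have h8 : fderiv ℝ ψ 0 (1, 0) = (fderiv ℝ ψ 0 (1, 0)).1 • ((1:ℝ), (0:ℝ)) := by
      ext <;> simp [ht]
    rw [h8, map_smul] at h7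
    have h9 := congrArg Prod.snd h7
    have h10 := congrArg Prod.fst h7
    simp only [Prod.smul_snd, Prod.smul_fst, smul_eq_mul] at h9 h10
    rcases mul_eq_zero.1 h9 with h | h
    · rw [h] at h10; simp at h10
    · exact h
  · have c1 : Tendsto θ (𝓝 0) (𝓝 0) := by
      have := hθ.continuous.tendsto 0; rwa [hθ0] at this
    have c2 : Tendsto γ (𝓝 0) (𝓝 0) := by
      have := hγ.tendsto 0; rwa [h0] at this
    filter_upwards [c1.eventually he, hθ2, c2.eventually h3] with t e1 e2 e3
    rw [← e1, e2, e3]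

lemma CEq.trans {γ γ' γ'' : ℝ → ℝ × ℝ} (h : CEq γ γ') (h' : CEq γ' γ'') : CEq γ γ'' := by
  obtain ⟨ψ, τ, hψ, hτ, hψ0, hτ0, hb, ht, hd, he⟩ := h
  obtain ⟨ψ', τ', hψ', hτ', hψ0', hτ0', hb', ht', hd', he'⟩ := h'
  have hf : fderiv ℝ (ψ' ∘ ψ) 0 = (fderiv ℝ ψ' 0).comp (fderiv ℝ ψ 0) := by
    rw [fderiv_comp 0 (hψ'.differentiable (by simp) _) (hψ.differentiable (by simp) _), hψ0]
  refine ⟨ψ' ∘ ψ, τ ∘ τ', hψ'.comp hψ, hτ.comp hτ', by simp [hψ0, hψ0'], by simp [hτ0, hτ0'],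
    ?_, ?_, ?_, ?_⟩
  · rw [hf]; exact hb'.comp hb
  · rw [hf]
    have h8 : fderiv ℝ ψ 0 (1, 0) = (fderiv ℝ ψ 0 (1, 0)).1 • ((1:ℝ), (0:ℝ)) := by
      ext <;> simp [ht]
    rw [ContinuousLinearMap.comp_apply, h8, map_smul]
    simp [ht']
  · rw [deriv_comp 0 (hτ.differentiable (by simp) _) (hτ'.differentiable (by simp) _), hτ0']
    exact mul_ne_zero hd hd'
  · have c1 : Tendsto τ' (𝓝 0) (𝓝 0) := by
      have := hτ'.continuous.tendsto 0; rwa [hτ0'] at this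
    filter_upwards [he', c1.eventually he] with t e1 e2
    simp only [Function.comp]
    rw [e2, e1]

/-- Smooth functions vanishing to second order at the origin. -/
def Quad (Q : ℝ × ℝ → ℝ) : Prop :=
  ContDiff ℝ ∞ Q ∧ Q 0 = 0 ∧ HasFDerivAt Q (0 : ℝ × ℝ →L[ℝ] ℝ) 0

lemma quad_zero : Quad (fun _ => 0) := ⟨contDiff_const, rfl, hasFDerivAt_const _ _⟩

lemma Quad.add {Q R : ℝ × ℝ → ℝ} (hQ : Quad Q) (hR : Quad R) : Quad (fun p => Q p + R p) := by
  refine ⟨hQ.1.add hR.1, by simp [hQ.2.1, hR.2.1], ?_⟩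
  simpa using hQ.2.2.fun_add hR.2.2

lemma quad_mul {u v : ℝ × ℝ → ℝ} (hu : ContDiff ℝ ∞ u) (hv : ContDiff ℝ ∞ v) (hu0 : u 0 = 0)
    (hv0 : v 0 = 0) : Quad (fun p => u p * v p) := by
  refine ⟨hu.mul hv, by simp [hu0], ?_⟩
  have h1 := (hu.differentiable (by simp) 0).hasFDerivAt
  have h2 := (hv.differentiable (by simp) 0).hasFDerivAt
  simpa [hu0, hv0] using h1.fun_mul h2

lemma CEq_mk (γ γ' : ℝ → ℝ × ℝ) (A B D : ℝ) (hA : A ≠ 0) (hD : D ≠ 0) (Q R : ℝ × ℝ → ℝ)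
    (hQ : Quad Q) (hR : Quad R) (S : ℝ → ℝ) (hS : ContDiff ℝ ∞ S) (hS0 : S 0 = 0)
    (hSd : deriv S 0 ≠ 0)
    (h1 : ∀ᶠ t in 𝓝 (0:ℝ), A * (γ t).1 + B * (γ t).2 + Q (γ t) = (γ' (S t)).1)
    (h2 : ∀ᶠ t in 𝓝 (0:ℝ), D * (γ t).2 + R (γ t) = (γ' (S t)).2) : CEq γ γ' := by
  obtain ⟨θ, hθ, hθ0, hθd, hθ1, hθ2⟩ := inverse1 S hS hS0 hSd
  have hQs := hQ.1
  have hRs := hR.1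
  let ψ : ℝ × ℝ → ℝ × ℝ := fun p => (A * p.1 + B * p.2 + Q p, D * p.2 + R p)
  have hψ : ContDiff ℝ ∞ ψ := by simp only [ψ]; fun_prop
  let L : ℝ × ℝ →L[ℝ] ℝ × ℝ := (A • ContinuousLinearMap.fst ℝ ℝ ℝ + B • ContinuousLinearMap.snd ℝ ℝ ℝ).prod
    (D • ContinuousLinearMap.snd ℝ ℝ ℝ)
  have hL : ∀ p, L p = (A * p.1 + B * p.2, D * p.2) := fun p => rfl
  have hfd : fderiv ℝ ψ 0 = L := by
    apply HasFDerivAt.fderiv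
    have e1 : HasFDerivAt (fun p : ℝ × ℝ => A * p.1 + B * p.2 + Q p)
        (A • ContinuousLinearMap.fst ℝ ℝ ℝ + B • ContinuousLinearMap.snd ℝ ℝ ℝ + 0) 0 :=
      ((hasFDerivAt_fst.const_mul A).fun_add (hasFDerivAt_snd.const_mul B)).fun_add hQ.2.2
    have e2 : HasFDerivAt (fun p : ℝ × ℝ => D * p.2 + R p)
        (D • ContinuousLinearMap.snd ℝ ℝ ℝ + 0) 0 :=
      (hasFDerivAt_snd.const_mul D).fun_add hR.2.2
    rw [add_zero] at e1 e2
    exact e1.prodMk e2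
  refine ⟨ψ, θ, hψ, hθ, ?_, hθ0, ?_, ?_, hθd, ?_⟩
  · simp [ψ, hQ.2.1, hR.2.1]
  · rw [hfd]
    constructor
    · rintro ⟨a, b⟩ ⟨a', b'⟩ h
      simp only [hL, Prod.mk.injEq] at h
      have hb : b = b' := mul_left_cancel₀ hD h.2
      subst hb
      have ha : a = a' := mul_left_cancel₀ hA (by linarith [h.1])
      rw [ha]
    · rintro ⟨a, b⟩
      refine ⟨((a - B * (b / D)) / A, b / D), ?_⟩
      rw [hL]
      ext <;> simp only <;> field_simp
      ring
  · rw [hfd, hL]; simp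
  · have c1 : Tendsto θ (𝓝 0) (𝓝 0) := by
      have := hθ.continuous.tendsto 0; rwa [hθ0] at this
    filter_upwards [c1.eventually h1, c1.eventually h2, hθ2] with t e1 e2 e3
    rw [e3] at e1 e2
    exact Prod.ext e1 e2

/-- Remainders transform well under reparametrisation. -/
lemma remainder_reparam (n : ℕ) (S : ℝ → ℝ) (hS : ContDiff ℝ ∞ S) (hS0 : S 0 = 0)
    (hSd : deriv S 0 ≠ 0) (r : ℝ → ℝ) (hr : ContDiff ℝ ∞ r) :
    ∃ r' : ℝ → ℝ, ContDiff ℝ ∞ r' ∧ ∀ᶠ t in 𝓝 (0:ℝ), t ^ n * r t = S t ^ n * r' (S t) := by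
  obtain ⟨θ, hθ, hθ0, hθd, hθ1, hθ2⟩ := inverse1 S hS hS0 hSd
  obtain ⟨T, hT, hTe⟩ := hadamard1 θ hθ
  refine ⟨fun s => T s ^ n * r (θ s), by fun_prop, ?_⟩
  filter_upwards [hθ1] with t ht
  have h1 := hTe (S t)
  rw [ht, hθ0, zero_add] at h1
  have h2 : t ^ n = (S t * T (S t)) ^ n := by rw [← h1]
  simp only [ht]
  rw [h2, mul_pow]; ring

lemma deriv_mul_self (w : ℝ → ℝ) (hw : ContDiff ℝ ∞ w) : deriv (fun t => t * w t) 0 = w 0 := by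
  have h := (hasDerivAt_id (0:ℝ)).fun_mul (hw.differentiable (by simp) 0).hasDerivAt
  simpa using h.deriv

/-- Fourth root of `1 + s^n R` in the form `1 + s^n (R / 4 + s ...)`. -/
lemma root_expand (n : ℕ) (hn : n ≠ 0) (R : ℝ → ℝ) (hR : ContDiff ℝ ∞ R) :
    ∃ w N1 : ℝ → ℝ, ContDiff ℝ ∞ w ∧ ContDiff ℝ ∞ N1 ∧ w 0 = 1 ∧
      (∀ᶠ s in 𝓝 (0:ℝ), w s ^ 4 = 1 + s ^ n * R s) ∧
      (∀ᶠ s in 𝓝 (0:ℝ), w s = 1 + s ^ n * R s * (1 / 4 + s * N1 s)) := by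
  obtain ⟨w, hw, hw0, hw4⟩ := smooth_root4 (fun s => 1 + s ^ n * R s) (by fun_prop) (by simp [hn])
  obtain ⟨N, hN, hNe⟩ := smooth_recip (fun s => (w s + 1) * (w s ^ 2 + 1)) 0 (by fun_prop)
    (by rw [hw0]; norm_num)
  have hN0 : N 0 = 1 / 4 := by
    have := hNe.self_of_nhds
    rw [hw0] at this; linarith
  obtain ⟨N1, hN1, hN1e⟩ := hadamard1 N hN
  refine ⟨w, N1, hw, hN1, hw0, hw4, ?_⟩
  filter_upwards [hw4, hNe] with s h1 h2
  rw [← hN0, ← hN1e]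
  linear_combination (N s) * h1 - (w s - 1) * h2

/-- The normal form curves. -/
def NC (e : ℝ) : ℝ → ℝ × ℝ := fun s => (s ^ 4, s ^ 5 + e * s ^ 7)

lemma curve_step1 (a b : ℝ) (c v r1 r2 : ℝ → ℝ) (hr1 : ContDiff ℝ ∞ r1) (hr2 : ContDiff ℝ ∞ r2)
    (hc : ∀ᶠ t in 𝓝 (0:ℝ), c t = -5 * t ^ 4 - 6 * a * t ^ 5 - 7 * b * t ^ 6 + t ^ 7 * r1 t)
    (hv : ∀ᶠ t in 𝓝 (0:ℝ), v t = -4 * t ^ 5 - 5 * a * t ^ 6 - 6 * b * t ^ 7 + t ^ 8 * r2 t) :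
    ∃ R1 R2 : ℝ → ℝ, ContDiff ℝ ∞ R1 ∧ ContDiff ℝ ∞ R2 ∧
      CEq (fun t => (c t, v t)) (fun s => (s ^ 4 + s ^ 7 * R1 s,
        s ^ 5 + (-(b - 5 / 8 * a ^ 2) / 4) * s ^ 7 + s ^ 8 * R2 s)) := by
  set e := -(b - 5 / 8 * a ^ 2) / 4 with he
  set p := a / 4 with hp
  set κ := 7 * b / 20 - 5 * a ^ 2 / 32 with hκ
  let S : ℝ → ℝ := fun t => t * (1 + t * (p + κ * t))
  have hS : ContDiff ℝ ∞ S := by simp only [S]; fun_prop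
  have hS0 : S 0 = 0 := by simp [S]
  have hSd : deriv S 0 ≠ 0 := by
    have := deriv_mul_self (fun t => 1 + t * (p + κ * t)) (by fun_prop)
    simp only [S]; rw [this]; norm_num
  obtain ⟨R1, hR1, hR1e⟩ := remainder_reparam 7 S hS hS0 hSd (fun t =>
    -r1 t / 5 - 6 * a * b / 20 + a * r2 t * t / 20 - (12 * p * κ + 6 * κ ^ 2 * t +
      4 * (p + κ * t) ^ 3 + t * (p + κ * t) ^ 4)) (by fun_prop)
  obtain ⟨R2, hR2, hR2e⟩ := remainder_reparam 8 S hS hS0 hSd (fun t =>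
    -r2 t / 4 - (20 * p * κ + 10 * κ ^ 2 * t + 10 * (p + κ * t) ^ 3 + 5 * t * (p + κ * t) ^ 4
      + t ^ 2 * (p + κ * t) ^ 5) - e * (p + κ * t) * (7 + 21 * (t * (p + κ * t))
        + 35 * (t * (p + κ * t)) ^ 2 + 35 * (t * (p + κ * t)) ^ 3 + 21 * (t * (p + κ * t)) ^ 4
        + 7 * (t * (p + κ * t)) ^ 5 + (t * (p + κ * t)) ^ 6)) (by fun_prop)
  refine ⟨R1, R2, hR1, hR2, CEq_mk _ _ (-1/5) (a/20) (-1/4) (by norm_num) (by norm_num)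
    (fun _ => 0) (fun _ => 0) quad_zero quad_zero S hS hS0 hSd ?_ ?_⟩
  · filter_upwards [hc, hv, hR1e] with t h1 h2 h3
    simp only [h1, h2]
    rw [← h3]
    simp only [S, hp, hκ]
    ring
  · filter_upwards [hv, hR2e] with t h2 h3
    simp only [h2]
    rw [← h3]
    simp only [S, hp, hκ, he]
    ring

lemma curve_step2 (e : ℝ) (R1 R2 : ℝ → ℝ) (hR1 : ContDiff ℝ ∞ R1) (hR2 : ContDiff ℝ ∞ R2) :
    ∃ R : ℝ → ℝ, ContDiff ℝ ∞ R ∧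
      CEq (fun s => (s ^ 4 + s ^ 7 * R1 s, s ^ 5 + e * s ^ 7 + s ^ 8 * R2 s))
        (fun s => (s ^ 4, s ^ 5 + e * s ^ 7 + s ^ 8 * R s)) := by
  obtain ⟨w, N1, hw, hN1, hw0, hw4, hwe⟩ := root_expand 3 (by norm_num) R1 hR1
  let S : ℝ → ℝ := fun t => t * w t
  have hS : ContDiff ℝ ∞ S := by simp only [S]; fun_prop
  have hS0 : S 0 = 0 := by simp [S]
  have hSd : deriv S 0 ≠ 0 := by
    simp only [S]; rw [deriv_mul_self w hw, hw0]; norm_num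
  let q : ℝ → ℝ := fun s => R1 s * (1 / 4 + s * N1 s)
  have hq : ContDiff ℝ ∞ q := by simp only [q]; fun_prop
  obtain ⟨R, hR, hRe⟩ := remainder_reparam 8 S hS hS0 hSd (fun s =>
    R2 s - q s * (5 + 10 * (s ^ 3 * q s) + 10 * (s ^ 3 * q s) ^ 2 + 5 * (s ^ 3 * q s) ^ 3
      + (s ^ 3 * q s) ^ 4) - e * s ^ 2 * q s * (7 + 21 * (s ^ 3 * q s) + 35 * (s ^ 3 * q s) ^ 2
      + 35 * (s ^ 3 * q s) ^ 3 + 21 * (s ^ 3 * q s) ^ 4 + 7 * (s ^ 3 * q s) ^ 5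
      + (s ^ 3 * q s) ^ 6)) (by fun_prop)
  refine ⟨R, hR, CEq_mk _ _ 1 0 1 one_ne_zero one_ne_zero
    (fun _ => 0) (fun _ => 0) quad_zero quad_zero S hS hS0 hSd ?_ ?_⟩
  · filter_upwards [hw4] with t h1
    simp only [S, mul_pow, h1]
    ring
  · filter_upwards [hwe, hRe] with t h2 h3
    rw [← h3]
    have h4 : S t = t * (1 + t ^ 3 * q t) := by
      simp only [S, q]; rw [h2]; ring
    rw [h4]
    ring

lemma curve_step3 (e : ℝ) (r : ℝ → ℝ) (hr : ContDiff ℝ ∞ r) :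
    ∃ (q : ℝ) (R : ℝ → ℝ), ContDiff ℝ ∞ R ∧
      CEq (fun s => (s ^ 4, s ^ 5 + e * s ^ 7 + s ^ 8 * r s))
        (fun s => (s ^ 4, s ^ 5 + e * s ^ 7 + q * s ^ 11 + s ^ 12 * R s)) := by
  obtain ⟨r1, hr1, h1⟩ := hadamard1 r hr
  obtain ⟨r2, hr2, h2⟩ := hadamard1 r1 hr1
  obtain ⟨r3, hr3, h3⟩ := hadamard1 r2 hr2
  let m : ℝ → ℝ := fun s => r3 s - r1 0 * (e + s * r s) - r2 0 * (2 * (e * s + s ^ 2 * r s)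
    + s * (e * s + s ^ 2 * r s) ^ 2)
  have hm : ContDiff ℝ ∞ m := by simp only [m]; fun_prop
  obtain ⟨R, hR, hRe⟩ := hadamard1 m hm
  refine ⟨m 0, R, hR, CEq_mk _ _ 1 0 1 one_ne_zero one_ne_zero
    (fun _ => 0) (fun p => p.1 * (-r 0 * p.1) + p.1 * (-r1 0 * p.2) + p.2 * (-r2 0 * p.2))
    quad_zero ?_ (fun s => s) contDiff_id rfl (by simp) ?_ ?_⟩
  · refine Quad.add (Quad.add (quad_mul ?_ ?_ ?_ ?_) (quad_mul ?_ ?_ ?_ ?_)) (quad_mul ?_ ?_ ?_ ?_)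
    all_goals first | fun_prop | simp
  · filter_upwards with t
    ring
  · filter_upwards with t
    have e1 := h1 t
    have e2 := h2 t
    have e3 := h3 t
    have e4 := hRe t
    have e5 : m t = r3 t - r1 0 * (e + t * r t) - r2 0 * (2 * (e * t + t ^ 2 * r t)
      + t * (e * t + t ^ 2 * r t) ^ 2) := rfl
    linear_combination t ^ 8 * e1 + t ^ 9 * e2 + t ^ 10 * e3 + t ^ 11 * e4 - t ^ 11 * e5

lemma step4_alg (t κ Z n' r' e : ℝ) (h5 : Z = κ / 4 + t * n') :
    1 * (t ^ 5 + e * t ^ 7 + 5 * κ / 4 * t ^ 11 + t ^ 12 * r') + 0 =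
    (t * (1 + t ^ 6 * Z)) ^ 5 + e * (t * (1 + t ^ 6 * Z)) ^ 7 + t ^ 12 * (
    r' - 5 * n' - t ^ 5 * Z ^ 2 * (10 + 10 * (t ^ 6 * Z) + 5 * (t ^ 6 * Z) ^ 2
      + (t ^ 6 * Z) ^ 3) - e * t * Z * (7 + 21 * (t ^ 6 * Z) + 35 * (t ^ 6 * Z) ^ 2
      + 35 * (t ^ 6 * Z) ^ 3 + 21 * (t ^ 6 * Z) ^ 4 + 7 * (t ^ 6 * Z) ^ 5
      + (t ^ 6 * Z) ^ 6)) := by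
  have h7 : ∀ x : ℝ, (1 + x) ^ 5 = 1 + 5 * x + x ^ 2 * (10 + 10 * x + 5 * x ^ 2 + x ^ 3) := by
    intro x; ring
  have h8 : ∀ x : ℝ, (1 + x) ^ 7 = 1 + x * (7 + 21 * x + 35 * x ^ 2
    + 35 * x ^ 3 + 21 * x ^ 4 + 7 * x ^ 5 + x ^ 6) := by
    intro x; ring
  rw [mul_pow, mul_pow, h7, h8]
  generalize (7 + 21 * (t ^ 6 * Z) + 35 * (t ^ 6 * Z) ^ 2
    + 35 * (t ^ 6 * Z) ^ 3 + 21 * (t ^ 6 * Z) ^ 4 + 7 * (t ^ 6 * Z) ^ 5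
    + (t ^ 6 * Z) ^ 6) = U
  generalize (10 + 10 * (t ^ 6 * Z) + 5 * (t ^ 6 * Z) ^ 2 + (t ^ 6 * Z) ^ 3) = V
  linear_combination (-5 * t ^ 11) * h5

set_option maxHeartbeats 1000000 in
lemma curve_step4 (e q : ℝ) (r : ℝ → ℝ) (hr : ContDiff ℝ ∞ r) :
    ∃ (R : ℝ → ℝ), ContDiff ℝ ∞ R ∧
      CEq (fun s => (s ^ 4, s ^ 5 + e * s ^ 7 + q * s ^ 11 + s ^ 12 * r s))
        (fun s => (s ^ 4, s ^ 5 + e * s ^ 7 + s ^ 12 * R s)) := by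
  set κ := 4 * q / 5 with hκ
  let y : ℝ → ℝ := fun s => 2 * (e + q * s ^ 4 + s ^ 5 * r s) +
    s ^ 2 * (e + q * s ^ 4 + s ^ 5 * r s) ^ 2
  have hy : ContDiff ℝ ∞ y := by simp only [y]; fun_prop
  obtain ⟨w, N1, hw, hN1, hw0, hw4, hwe⟩ := root_expand 6 (by norm_num)
    (fun s => κ * (1 + s ^ 2 * y s)) (by fun_prop)
  let S : ℝ → ℝ := fun t => t * w t
  have hS : ContDiff ℝ ∞ S := by simp only [S]; fun_prop
  have hS0 : S 0 = 0 := by simp [S]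
  have hSd : deriv S 0 ≠ 0 := by
    simp only [S]; rw [deriv_mul_self w hw, hw0]; norm_num
  let n : ℝ → ℝ := fun s => κ * N1 s + κ * s * y s * (1 / 4 + s * N1 s)
  have hn : ContDiff ℝ ∞ n := by simp only [n]; fun_prop
  let z : ℝ → ℝ := fun s => κ / 4 + s * n s
  have hz : ContDiff ℝ ∞ z := by simp only [z]; fun_prop
  obtain ⟨R, hR, hRe⟩ := remainder_reparam 12 S hS hS0 hSd (fun s =>
    r s - 5 * n s - s ^ 5 * z s ^ 2 * (10 + 10 * (s ^ 6 * z s) + 5 * (s ^ 6 * z s) ^ 2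
      + (s ^ 6 * z s) ^ 3) - e * s * z s * (7 + 21 * (s ^ 6 * z s) + 35 * (s ^ 6 * z s) ^ 2
      + 35 * (s ^ 6 * z s) ^ 3 + 21 * (s ^ 6 * z s) ^ 4 + 7 * (s ^ 6 * z s) ^ 5
      + (s ^ 6 * z s) ^ 6)) (by fun_prop)
  refine ⟨R, hR, CEq_mk _ _ 1 0 1 one_ne_zero one_ne_zero
    (fun p => p.2 * (κ * p.2)) (fun _ => 0) ?_ quad_zero S hS hS0 hSd ?_ ?_⟩
  · apply quad_mul
    all_goals first | fun_prop | simp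
  · filter_upwards [hw4] with t h1
    simp only [S, mul_pow, h1, y]
    ring
  · filter_upwards [hwe, hRe] with t h2 h3
    rw [← h3]
    have h4 : S t = t * (1 + t ^ 6 * z t) := by
      simp only [S, z, n]; rw [h2]; ring
    have h5 : z t = κ / 4 + t * n t := rfl
    rw [h4]
    have hq : q = 5 * κ / 4 := by rw [hκ]; ring
    rw [hq]
    exact step4_alg t κ (z t) (n t) (r t) e h5

lemma curve_step5 (e : ℝ) (r : ℝ → ℝ) (hr : ContDiff ℝ ∞ r) :
      CEq (NC e) (fun s => (s ^ 4, s ^ 5 + e * s ^ 7 + s ^ 12 * r s)) := by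
  obtain ⟨r0, r1, r2, r3, h0, h1, h2, h3, hr'⟩ := whitney_split4 r hr
  obtain ⟨M, hM, hMe⟩ := smooth_recip (fun z : ℝ => 1 + e ^ 2 * z) 0 (by fun_prop) (by simp)
  obtain ⟨N, hN, hNe⟩ := smooth_recip (fun z : ℝ => 1 - e ^ 4 * z ^ 2) 0 (by fun_prop) (by simp)
  refine CEq_mk _ _ 1 0 1 one_ne_zero one_ne_zero (fun _ => 0)
    (fun p => p.1 * (p.1 * (p.1 * r0 p.1
        + r1 p.1 * (1 + 3 * e ^ 2 * p.1) * p.2 * N p.1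
        - r2 p.1 * 2 * e * p.1 ^ 2 * M p.1
        - r3 p.1 * (3 * e * p.1 + e ^ 3 * p.1 ^ 2) * p.2 * N p.1)) +
      p.2 * (- r1 p.1 * e * p.2 ^ 2 * N p.1 + r2 p.1 * p.1 * p.2 * M p.1
        + r3 p.1 * p.2 ^ 2 * N p.1)) quad_zero ?_ (fun s => s) contDiff_id rfl (by simp) ?_ ?_
  · refine Quad.add (quad_mul ?_ ?_ ?_ ?_) (quad_mul ?_ ?_ ?_ ?_)
    all_goals first | fun_prop | simp
  · filter_upwards with t
    simp [NC]
  · have c4 : Tendsto (fun t : ℝ => t ^ 4) (𝓝 0) (𝓝 0) := by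
      have : Continuous (fun t : ℝ => t ^ 4) := by fun_prop
      simpa using this.tendsto 0
    filter_upwards [c4.eventually hMe, c4.eventually hNe] with t e1 e2
    simp only [NC]
    rw [hr' t]
    linear_combination (r2 (t ^ 4) * t ^ 14) * e1 + (t ^ 13 * r1 (t ^ 4) + t ^ 15 * r3 (t ^ 4)) * e2

lemma NC_cont (e : ℝ) : Continuous (NC e) := by unfold NC; fun_prop
lemma NC_zero (e : ℝ) : NC e 0 = 0 := by simp [NC]

/-- Reduction of the curve to normal form. -/
lemma curve_normal (a b : ℝ) (c v r1 r2 : ℝ → ℝ) (hr1 : ContDiff ℝ ∞ r1) (hr2 : ContDiff ℝ ∞ r2)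
    (hc : ∀ᶠ t in 𝓝 (0:ℝ), c t = -5 * t ^ 4 - 6 * a * t ^ 5 - 7 * b * t ^ 6 + t ^ 7 * r1 t)
    (hv : ∀ᶠ t in 𝓝 (0:ℝ), v t = -4 * t ^ 5 - 5 * a * t ^ 6 - 6 * b * t ^ 7 + t ^ 8 * r2 t) :
    CEq (fun t => (c t, v t)) (NC (-(b - 5 / 8 * a ^ 2) / 4)) := by
  obtain ⟨R1, R2, hR1, hR2, H1⟩ := curve_step1 a b c v r1 r2 hr1 hr2 hc hv
  obtain ⟨R3, hR3, H2⟩ := curve_step2 _ R1 R2 hR1 hR2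
  obtain ⟨q, R4, hR4, H3⟩ := curve_step3 _ R3 hR3
  obtain ⟨R5, hR5, H4⟩ := curve_step4 _ q R4 hR4
  have H5 := (curve_step5 (-(b - 5 / 8 * a ^ 2) / 4) R5 hR5).symm (NC_cont _) (NC_zero _)
  exact H1.trans (H2.trans (H3.trans (H4.trans H5)))

lemma NC_scale (e μ : ℝ) (hμ : μ ≠ 0) : CEq (NC e) (NC (e * μ ^ 2)) := by
  refine CEq_mk _ _ ((μ⁻¹) ^ 4) 0 ((μ⁻¹) ^ 5) (by positivity) (by positivity)
    (fun _ => 0) (fun _ => 0) quad_zero quad_zero (fun t => t * μ⁻¹) (by fun_prop) (by simp) ?_ ?_ ?_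
  · rw [deriv_mul_self (fun _ => μ⁻¹) contDiff_const]; positivity
  · filter_upwards with t
    simp only [NC]; ring
  · filter_upwards with t
    simp only [NC]; field_simp; ring

lemma cancel_pow (n : ℕ) (ρ : ℝ → ℝ) (hρ : Continuous ρ) (h : ∀ᶠ t in 𝓝 (0:ℝ), t ^ n * ρ t = 0) :
    (∀ᶠ t in 𝓝 (0:ℝ), ρ t = 0) := by
  have h1 : ∀ᶠ t in 𝓝[≠] (0:ℝ), ρ t = 0 := by
    filter_upwards [h.filter_mono nhdsWithin_le_nhds, self_mem_nhdsWithin] with t ht ht0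
    exact (mul_eq_zero.1 ht).resolve_left (pow_ne_zero _ ht0)
  have h2 : ρ 0 = 0 := by
    have c1 : Tendsto ρ (𝓝[≠] 0) (𝓝 (ρ 0)) := (hρ.tendsto 0).mono_left nhdsWithin_le_nhds
    have c2 : Tendsto ρ (𝓝[≠] 0) (𝓝 0) :=
      (tendsto_congr' (h1.mono fun t ht => ht)).2 tendsto_const_nhds
    exact tendsto_nhds_unique c1 c2
  have h3 := eventually_nhdsWithin_iff.1 h1
  filter_upwards [h3] with t ht
  by_cases h0 : t = 0
  · rw [h0, h2]
  · exact ht h0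

lemma quad_repr (h : ℝ × ℝ → ℝ) (hh : ContDiff ℝ ∞ h) (h0 : h 0 = 0) :
    ∃ (β : ℝ) (A : ℝ × ℝ → ℝ) (B C : ℝ → ℝ), ContDiff ℝ ∞ A ∧ ContDiff ℝ ∞ B ∧ ContDiff ℝ ∞ C ∧
      ∀ X Y, h (X, Y) = fderiv ℝ h 0 (1, 0) * X + β * Y + X ^ 2 * A (X, Y) + X * Y * B Y
        + Y ^ 2 * C Y := by
  obtain ⟨h1, hs1, he1, hd1⟩ := hadamard2 h hh
  obtain ⟨A, hA, heA, -⟩ := hadamard2 h1 hs1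
  obtain ⟨B, hB, heB⟩ := hadamard1 (fun y => h1 (0, y)) (by fun_prop)
  obtain ⟨k, hk, hek⟩ := hadamard1 (fun y => h (0, y)) (by fun_prop)
  obtain ⟨C, hC, heC⟩ := hadamard1 k hk
  refine ⟨k 0, A, B, C, hA, hB, hC, fun X Y => ?_⟩
  have e0 : h (0, 0) = 0 := h0
  have e1 := hd1 0
  have e2 := he1 X Y
  have e3 := heA X Y
  have e4 := heB Y
  have e5 := hek Y
  have e6 := heC Y
  simp only [e0] at e4 e5
  have e7 : fderiv ℝ h 0 (1, 0) = h1 (0, 0) := e1.symm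
  rw [e7]
  linear_combination e2 + X * e3 + X * e4 + e5 + Y * e6

lemma NC_noneq (e : ℝ) (h : CEq (NC e) (NC 0)) : e = 0 := by
  obtain ⟨ψ, τ, hψ, hτ, hψ0, hτ0, hb, ht, hd, he⟩ := h
  obtain ⟨u, hu, hue⟩ := hadamard1 τ hτ
  obtain ⟨w, hw, hwe⟩ := hadamard1 u hu
  obtain ⟨w2, hw2, hwe2⟩ := hadamard1 w hw
  have hfd1 : fderiv ℝ (fun p => (ψ p).2) 0 (1, 0) = 0 := by
    have := (hψ.differentiable (by simp) 0).hasFDerivAt.snd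
    rw [this.fderiv]; simpa using ht
  obtain ⟨δ, A, B, C, hA, hB, hC, hψ2⟩ := quad_repr (fun p => (ψ p).2) (by fun_prop) (by simp [hψ0])
  obtain ⟨β, A', B', C', hA', hB', hC', hψ1⟩ :=
    quad_repr (fun p => (ψ p).1) (by fun_prop) (by simp [hψ0])
  rw [hfd1] at hψ2
  set α := fderiv ℝ (fun p => (ψ p).1) 0 (1, 0)
  simp only [hτ0, zero_add] at hue
  have hAc := hA.continuous
  have hBc := hB.continuous
  have hCc := hC.continuous
  have hAc' := hA'.continuous
  have hBc' := hB'.continuous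
  have hCc' := hC'.continuous
  have huc := hu.continuous
  have hwc := hw.continuous
  have hwc2 := hw2.continuous
  have hτc := hτ.continuous
  -- quotients
  let y : ℝ → ℝ := fun t => u t ^ 5 + e * t ^ 2 * u t ^ 7
  have hy : Continuous y := by simp only [y]; fun_prop
  let X : ℝ → ℝ := fun t => t ^ 4 * u t ^ 4
  have hX : Continuous X := by simp only [X]; fun_prop
  let Y : ℝ → ℝ := fun t => t ^ 5 * y t
  have hY : Continuous Y := by simp only [Y]; fun_prop
  let q2 : ℝ → ℝ := fun t => u t ^ 8 * A (X t, Y t) + t * u t ^ 4 * y t * B (Y t)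
    + t ^ 2 * y t ^ 2 * C (Y t)
  have hq2 : Continuous q2 := by simp only [q2]; fun_prop
  let q1 : ℝ → ℝ := fun t => u t ^ 8 * A' (X t, Y t) + t * u t ^ 4 * y t * B' (Y t)
    + t ^ 2 * y t ^ 2 * C' (Y t)
  have hq1 : Continuous q1 := by simp only [q1]; fun_prop
  have hNC : ∀ t, NC e (τ t) = (X t, Y t) := by
    intro t; simp only [NC, X, Y, y, hue t]; ext <;> simp only <;> ring
  have E2 : ∀ᶠ t in 𝓝 (0:ℝ), δ * y t + t ^ 3 * q2 t - 1 = 0 := by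
    apply cancel_pow 5 (fun t => δ * y t + t ^ 3 * q2 t - 1) (by fun_prop)
    filter_upwards [he] with t h
    rw [hNC] at h
    have h' := congrArg Prod.snd h
    have h2 := hψ2 (X t) (Y t)
    simp only [NC] at h'
    rw [h'] at h2
    have e1 : X t = t ^ 4 * u t ^ 4 := rfl
    have e2 : Y t = t ^ 5 * y t := rfl
    have e3 : q2 t = u t ^ 8 * A (X t, Y t) + t * u t ^ 4 * y t * B (Y t)
      + t ^ 2 * y t ^ 2 * C (Y t) := rfl
    rw [e3]
    generalize A (X t, Y t) = a at *
    generalize B (Y t) = b at *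
    generalize C (Y t) = c at *
    rw [e1, e2] at h2
    linear_combination -h2
  have E1 : ∀ᶠ t in 𝓝 (0:ℝ), α * u t ^ 4 + β * t * y t + t ^ 4 * q1 t - 1 = 0 := by
    apply cancel_pow 4 (fun t => α * u t ^ 4 + β * t * y t + t ^ 4 * q1 t - 1) (by fun_prop)
    filter_upwards [he] with t h
    rw [hNC] at h
    have h' := congrArg Prod.fst h
    have h2 := hψ1 (X t) (Y t)
    simp only [NC] at h'
    rw [h'] at h2
    have e1 : X t = t ^ 4 * u t ^ 4 := rfl
    have e2 : Y t = t ^ 5 * y t := rfl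
    have e3 : q1 t = u t ^ 8 * A' (X t, Y t) + t * u t ^ 4 * y t * B' (Y t)
      + t ^ 2 * y t ^ 2 * C' (Y t) := rfl
    rw [e3]
    generalize A' (X t, Y t) = a at *
    generalize B' (Y t) = b at *
    generalize C' (Y t) = c at *
    rw [e1, e2] at h2
    linear_combination -h2
  set u0 := u 0 with hu0
  have a1 : δ * u0 ^ 5 = 1 := by
    have := E2.self_of_nhds
    simp only [y] at this
    norm_num at this
    linarith
  have a2 : α * u0 ^ 4 = 1 := by
    have := E1.self_of_nhds
    norm_num at this
    linarith
  have hδ : δ ≠ 0 := by rintro rfl; simp at a1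
  have hα : α ≠ 0 := by rintro h; simp [h] at a2
  have hu00 : u0 ≠ 0 := by rintro h; simp [h] at a2
  have F2 : ∀ᶠ t in 𝓝 (0:ℝ), δ * (5 * u0 ^ 4 * w t + t * (10 * u0 ^ 3 * w t ^ 2
      + 10 * u0 ^ 2 * w t ^ 3 * t + 5 * u0 * w t ^ 4 * t ^ 2 + w t ^ 5 * t ^ 3) + e * t * u t ^ 7)
      + t ^ 2 * q2 t = 0 := by
    apply cancel_pow 1 (fun t => δ * (5 * u0 ^ 4 * w t + t * (10 * u0 ^ 3 * w t ^ 2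
      + 10 * u0 ^ 2 * w t ^ 3 * t + 5 * u0 * w t ^ 4 * t ^ 2 + w t ^ 5 * t ^ 3) + e * t * u t ^ 7)
      + t ^ 2 * q2 t) (by fun_prop)
    filter_upwards [E2] with t h
    have h' : δ * (u t ^ 5 + e * t ^ 2 * u t ^ 7) + t ^ 3 * q2 t - 1 = 0 := h
    have h5 : u t ^ 5 = (u0 + t * w t) ^ 5 := by rw [hwe t]
    rw [h5] at h'
    linear_combination h' - a1
  have u1 : w 0 = 0 := by
    have := F2.self_of_nhds
    norm_num at this
    tauto
  simp only [u1, zero_add] at hwe2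
  have G2 : ∀ᶠ t in 𝓝 (0:ℝ), δ * (5 * u0 ^ 4 * w2 t + t ^ 2 * (10 * u0 ^ 3 * w2 t ^ 2
      + 10 * u0 ^ 2 * w2 t ^ 3 * t ^ 2 + 5 * u0 * w2 t ^ 4 * t ^ 4 + w2 t ^ 5 * t ^ 6)
      + e * u t ^ 7) + t * q2 t = 0 := by
    apply cancel_pow 1 (fun t => δ * (5 * u0 ^ 4 * w2 t + t ^ 2 * (10 * u0 ^ 3 * w2 t ^ 2
      + 10 * u0 ^ 2 * w2 t ^ 3 * t ^ 2 + 5 * u0 * w2 t ^ 4 * t ^ 4 + w2 t ^ 5 * t ^ 6)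
      + e * u t ^ 7) + t * q2 t) (by fun_prop)
    filter_upwards [F2] with t h
    rw [hwe2 t] at h
    linear_combination h
  have F1 : ∀ᶠ t in 𝓝 (0:ℝ), α * (4 * u0 ^ 3 * w t + t * (6 * u0 ^ 2 * w t ^ 2
      + 4 * u0 * w t ^ 3 * t + w t ^ 4 * t ^ 2)) + β * y t + t ^ 3 * q1 t = 0 := by
    apply cancel_pow 1 (fun t => α * (4 * u0 ^ 3 * w t + t * (6 * u0 ^ 2 * w t ^ 2
      + 4 * u0 * w t ^ 3 * t + w t ^ 4 * t ^ 2)) + β * y t + t ^ 3 * q1 t) (by fun_prop)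
    filter_upwards [E1] with t h
    have h5 : u t ^ 4 = (u0 + t * w t) ^ 4 := by rw [hwe t]
    rw [h5] at h
    linear_combination h - a2
  have b0 : β = 0 := by
    have := F1.self_of_nhds
    simp only [y, u1] at this
    norm_num at this
    rcases this with h | h
    · exact h
    · exact absurd h hu00
  have G1 : ∀ᶠ t in 𝓝 (0:ℝ), α * (4 * u0 ^ 3 * w2 t + t ^ 2 * (6 * u0 ^ 2 * w2 t ^ 2
      + 4 * u0 * w2 t ^ 3 * t ^ 2 + w2 t ^ 4 * t ^ 4)) + t ^ 2 * q1 t = 0 := by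
    apply cancel_pow 1 (fun t => α * (4 * u0 ^ 3 * w2 t + t ^ 2 * (6 * u0 ^ 2 * w2 t ^ 2
      + 4 * u0 * w2 t ^ 3 * t ^ 2 + w2 t ^ 4 * t ^ 4)) + t ^ 2 * q1 t) (by fun_prop)
    filter_upwards [F1] with t h
    rw [hwe2 t, b0] at h
    linear_combination h
  have u2 : w2 0 = 0 := by
    have := G1.self_of_nhds
    norm_num at this
    tauto
  have := G2.self_of_nhds
  rw [u2] at this
  norm_num at this
  tauto

lemma dop_contDiff (v : ℝ × ℝ) (g : ℝ × ℝ → ℝ) (hg : ContDiff ℝ ∞ g) : ContDiff ℝ ∞ (dop v g) := by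
  unfold dop
  exact (hg.fderiv_right (m := ∞) (by simp)).clm_apply contDiff_const

lemma pdy_contDiff (g : ℝ × ℝ → ℝ) (hg : ContDiff ℝ ∞ g) : ContDiff ℝ ∞ (pdy g) := dop_contDiff _ g hg
lemma pdx_contDiff (g : ℝ × ℝ → ℝ) (hg : ContDiff ℝ ∞ g) : ContDiff ℝ ∞ (pdx g) := dop_contDiff _ g hg

lemma fderiv_split (g : ℝ × ℝ → ℝ) (p : ℝ × ℝ) (a b : ℝ) :
    fderiv ℝ g p (a, b) = a * pdx g p + b * pdy g p := by
  have : ((a, b) : ℝ × ℝ) = a • ((1:ℝ), (0:ℝ)) + b • ((0:ℝ), (1:ℝ)) := by simp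
  rw [this, map_add, map_smul, map_smul]; rfl

lemma pdx_pdy_comm (g : ℝ × ℝ → ℝ) (hg : ContDiff ℝ ∞ g) : pdx (pdy g) = pdy (pdx g) := by
  funext p
  have hs : IsSymmSndFDerivAt ℝ g p := hg.contDiffAt.isSymmSndFDerivAt (by
    rw [minSmoothness_of_isRCLikeNormedField]; exact WithTop.coe_le_coe.2 (le_top : (2 : ℕ∞) ≤ ⊤))
  have hd : DifferentiableAt ℝ (fderiv ℝ g) p :=
    (hg.fderiv_right (m := ∞) (by simp)).differentiable (by simp) p
  have key : ∀ v w : ℝ × ℝ, fderiv ℝ (fun q => fderiv ℝ g q v) p w = fderiv ℝ (fderiv ℝ g) p w v := by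
    intro v w
    rw [fderiv_clm_apply hd (by fun_prop)]
    simp
  simp only [pdx, pdy, dop]
  exact (key _ _).trans ((hs _ _).trans (key _ _).symm)

lemma pdy_hasDerivAt (g : ℝ × ℝ → ℝ) (hg : ContDiff ℝ ∞ g) (x y : ℝ) :
    HasDerivAt (fun t => g (x, t)) (pdy g (x, y)) y := by
  have h1 := (hg.differentiable (by simp) (x, y)).hasFDerivAt
  exact h1.comp_hasDerivAt y ((hasDerivAt_const y x).prodMk (hasDerivAt_id y))

lemma iter_pdy (j : ℕ) : ∀ (g : ℝ × ℝ → ℝ), ContDiff ℝ ∞ g → ∀ x y,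
    (pdy^[j] g) (x, y) = iteratedDeriv j (fun t => g (x, t)) y := by
  induction j with
  | zero => intro g _ x y; simp
  | succ n ih =>
    intro g hg x y
    rw [Function.iterate_succ_apply, ih _ (pdy_contDiff g hg), iteratedDeriv_succ']
    congr 1
    funext t
    exact (pdy_hasDerivAt g hg x t).deriv.symm

lemma pdx_iter_pdy (j : ℕ) : ∀ (g : ℝ × ℝ → ℝ), ContDiff ℝ ∞ g →
    pdx (pdy^[j] g) = pdy^[j] (pdx g) := by
  induction j with
  | zero => intro g _; simp
  | succ n ih =>
    intro g hg
    rw [Function.iterate_succ_apply, Function.iterate_succ_apply, ih _ (pdy_contDiff g hg),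
      pdx_pdy_comm g hg]

lemma tcoeff_zero (g : ℝ × ℝ → ℝ) (hg : ContDiff ℝ ∞ g) (j : ℕ) :
    tcoeff g 0 j = iteratedDeriv j (fun t => g (0, t)) 0 / (Nat.factorial j) := by
  unfold tcoeff
  rw [← iter_pdy j g hg 0 0]
  simp; rfl

lemma tcoeff_one (g : ℝ × ℝ → ℝ) (hg : ContDiff ℝ ∞ g) (j : ℕ) :
    tcoeff g 1 j = iteratedDeriv j (fun t => pdx g (0, t)) 0 / (Nat.factorial j) := by
  unfold tcoeff
  rw [← iter_pdy j _ (pdx_contDiff g hg) 0 0, Function.iterate_one, pdx_iter_pdy j g hg]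
  simp; rfl

/-- `c` parametrises the critical set `g_y = 0` near the origin. -/
def CritData (g : ℝ × ℝ → ℝ) (c : ℝ → ℝ) : Prop :=
  ContDiff ℝ ∞ c ∧ c 0 = 0 ∧ (∀ᶠ t in 𝓝 (0:ℝ), pdy g (c t, t) = 0) ∧
    ∀ᶠ p in 𝓝 (0 : ℝ × ℝ), pdy g p = 0 → p.1 = c p.2

lemma crit_exists (g : ℝ × ℝ → ℝ) (hg : ContDiff ℝ ∞ g) (h0 : pdy g 0 = 0)
    (h1 : pdx (pdy g) 0 ≠ 0) : ∃ c, CritData g c := by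
  have hgy := pdy_contDiff g hg
  have hfd : fderiv ℝ (fun p : ℝ × ℝ => (pdy g p, p.2)) 0 =
      (fderiv ℝ (pdy g) 0).prod (ContinuousLinearMap.snd ℝ ℝ ℝ) :=
    ((hgy.differentiable (by simp) 0).hasFDerivAt.prodMk hasFDerivAt_snd).fderiv
  have hap : ∀ q : ℝ × ℝ, fderiv ℝ (fun p : ℝ × ℝ => (pdy g p, p.2)) 0 q =
      (q.1 * pdx (pdy g) 0 + q.2 * pdy (pdy g) 0, q.2) := by
    rintro ⟨a, b⟩
    rw [hfd, ContinuousLinearMap.prod_apply, fderiv_split]; rfl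
  obtain ⟨θ, t1, t2, t3, t4, -, -⟩ := smooth_inverse (fun p : ℝ × ℝ => (pdy g p, p.2)) 0 (by fun_prop)
    (by
      constructor
      · rintro ⟨a, b⟩ ⟨a', b'⟩ h
        rw [hap, hap] at h
        simp only [Prod.mk.injEq] at h
        obtain ⟨h2, h3⟩ := h
        subst h3
        have : a = a' := mul_right_cancel₀ h1 (by linarith)
        rw [this]
      · rintro ⟨a, b⟩
        refine ⟨((a - b * pdy (pdy g) 0) / pdx (pdy g) 0, b), ?_⟩
        rw [hap]; ext <;> simp only
        field_simp; ring)
  simp only [h0, Prod.snd_zero] at t2 t4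
  have e0 : ((0:ℝ), (0:ℝ)) = 0 := rfl
  rw [e0] at t2 t4
  refine ⟨fun y => (θ (0, y)).1, by fun_prop, by simp [e0, t2], ?_, ?_⟩
  · have c1 : Tendsto (fun t : ℝ => ((0:ℝ), t)) (𝓝 0) (𝓝 0) := by
      have : Continuous (fun t : ℝ => ((0:ℝ), t)) := by fun_prop
      simpa [e0] using this.tendsto 0
    filter_upwards [c1.eventually t4] with t ht
    simp only [Prod.mk.injEq] at ht
    conv_lhs => rw [show (((θ (0, t)).1, t) : ℝ × ℝ) = θ (0, t) from Prod.ext rfl ht.2.symm]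
    exact ht.1
  · filter_upwards [t3] with p hp h
    rw [h] at hp
    simp only [hp]

lemma crit_expand (g : ℝ × ℝ → ℝ) (hg : ContDiff ℝ ∞ g)
    (h0 : ∀ j < 5, tcoeff g 0 j = 0) (h05 : tcoeff g 0 5 = 1) (h10 : tcoeff g 1 0 = 0)
    (h11 : tcoeff g 1 1 = 1) (h1 : ∀ j, 2 ≤ j → j < 5 → tcoeff g 1 j = 0) (c : ℝ → ℝ)
    (hc : CritData g c) :
    ∃ r1 r2 : ℝ → ℝ, ContDiff ℝ ∞ r1 ∧ ContDiff ℝ ∞ r2 ∧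
      (∀ᶠ t in 𝓝 (0:ℝ), c t = -5 * t ^ 4 - 6 * tcoeff g 0 6 * t ^ 5 - 7 * tcoeff g 0 7 * t ^ 6
        + t ^ 7 * r1 t) ∧
      (∀ᶠ t in 𝓝 (0:ℝ), g (c t, t) = -4 * t ^ 5 - 5 * tcoeff g 0 6 * t ^ 6
        - 6 * tcoeff g 0 7 * t ^ 7 + t ^ 8 * r2 t) := by
  obtain ⟨hcs, hc0, hc1, -⟩ := hc
  set a := tcoeff g 0 6 with ha
  set b := tcoeff g 0 7 with hb
  obtain ⟨rA, hrA, hA⟩ := taylor1 8 (fun t => g (0, t)) (by fun_prop)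
  have hgx := pdx_contDiff g hg
  obtain ⟨rB, hrB, hB⟩ := taylor1 5 (fun t => pdx g (0, t)) (by fun_prop)
  have hA' : ∀ t, g (0, t) = t ^ 5 + a * t ^ 6 + b * t ^ 7 + t ^ 8 * rA t := by
    intro t
    rw [hA t]
    simp only [← tcoeff_zero g hg, Finset.sum_range_succ, Finset.sum_range_zero]
    rw [h0 0 (by norm_num), h0 1 (by norm_num), h0 2 (by norm_num), h0 3 (by norm_num),
      h0 4 (by norm_num), h05]
    ring
  have hB' : ∀ t, pdx g (0, t) = t + t ^ 5 * rB t := by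
    intro t
    rw [hB t]
    simp only [← tcoeff_one g hg, Finset.sum_range_succ, Finset.sum_range_zero]
    rw [h10, h11, h1 2 (by norm_num) (by norm_num), h1 3 (by norm_num) (by norm_num),
      h1 4 (by norm_num) (by norm_num)]
    ring
  obtain ⟨g1, hg1, hg1e, hg1d⟩ := hadamard2 g hg
  obtain ⟨E, hE, hEe, -⟩ := hadamard2 g1 hg1
  have hgE : ∀ x y, g (x, y) = (y ^ 5 + a * y ^ 6 + b * y ^ 7 + y ^ 8 * rA y)
      + x * (y + y ^ 5 * rB y) + x ^ 2 * E (x, y) := by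
    intro x y
    have e1 : g1 (0, y) = pdx g (0, y) := hg1d y
    rw [hg1e, hA', hEe x y, e1, hB']; ring
  have hrAs : ContDiff ℝ ∞ (deriv rA) := contDiff_deriv_infty hrA
  have hrBs : ContDiff ℝ ∞ (deriv rB) := contDiff_deriv_infty hrB
  have hEy := pdy_contDiff E hE
  have hgy : ∀ x y, pdy g (x, y) = y ^ 4 * (5 + 6 * a * y + 7 * b * y ^ 2 + y ^ 3 *
      (8 * rA y + y * deriv rA y)) + x * (1 + y ^ 4 * (5 * rB y + y * deriv rB y))
      + x ^ 2 * pdy E (x, y) := by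
    intro x y
    have d1 := pdy_hasDerivAt g hg x y
    have dA := (hrA.differentiable (by simp) y).hasDerivAt
    have dB := (hrB.differentiable (by simp) y).hasDerivAt
    have dE := pdy_hasDerivAt E hE x y
    have p5 := hasDerivAt_pow 5 y
    have p6 := hasDerivAt_pow 6 y
    have p7 := hasDerivAt_pow 7 y
    have p8 := hasDerivAt_pow 8 y
    have d2 := ((((p5.fun_add (p6.const_mul a)).fun_add (p7.const_mul b)).fun_add
      (p8.fun_mul dA)).fun_add (((hasDerivAt_id' y).fun_add (p5.fun_mul dB)).const_mul x)).fun_add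
      (dE.const_mul (x ^ 2))
    have d3 : HasDerivAt (fun t => g (x, t)) _ y := d2.congr_of_eventuallyEq
      (Eventually.of_forall fun t => hgE x t)
    rw [d1.unique d3]
    push_cast
    ring
  let α : ℝ → ℝ := fun y => 5 + 6 * a * y + 7 * b * y ^ 2 + y ^ 3 * (8 * rA y + y * deriv rA y)
  have hα : ContDiff ℝ ∞ α := by simp only [α]; fun_prop
  let M : ℝ → ℝ := fun y => 1 + y ^ 4 * (5 * rB y + y * deriv rB y) + c y * pdy E (c y, y)
  have hM : ContDiff ℝ ∞ M := by simp only [M]; fun_prop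
  obtain ⟨N, hN, hNe⟩ := smooth_recip M 0 hM (by simp [M, hc0])
  let c4 : ℝ → ℝ := fun y => - α y * N y
  have hc4 : ContDiff ℝ ∞ c4 := by simp only [c4]; fun_prop
  have hcc : ∀ᶠ t in 𝓝 (0:ℝ), c t = t ^ 4 * c4 t := by
    filter_upwards [hc1, hNe] with t e1 e2
    rw [hgy] at e1
    have e3 : t ^ 4 * α t + c t * M t = 0 := by simp only [α, M]; linear_combination e1
    have e4 : c4 t = - α t * N t := rfl
    rw [e4]
    linear_combination N t * e3 - c t * e2
  let m : ℝ → ℝ := fun t => (5 * rB t + t * deriv rB t) + c4 t * pdy E (c t, t)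
  have hm : ContDiff ℝ ∞ m := by simp only [m]; fun_prop
  let r1 : ℝ → ℝ := fun t => -(8 * rA t + t * deriv rA t) + t * α t * m t * N t
  have hr1 : ContDiff ℝ ∞ r1 := by simp only [r1]; fun_prop
  have hce : ∀ᶠ t in 𝓝 (0:ℝ), c t = -5 * t ^ 4 - 6 * a * t ^ 5 - 7 * b * t ^ 6 + t ^ 7 * r1 t := by
    filter_upwards [hcc, hNe] with t e1 e2
    have e3 : M t = 1 + t ^ 4 * m t := by
      have : M t = 1 + t ^ 4 * (5 * rB t + t * deriv rB t) + c t * pdy E (c t, t) := rfl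
      simp only [m]; rw [this]; linear_combination pdy E (c t, t) * e1
    have e4 : c4 t = - α t * N t := rfl
    have e5 : r1 t = -(8 * rA t + t * deriv rA t) + t * α t * m t * N t := rfl
    have e6 : α t = 5 + 6 * a * t + 7 * b * t ^ 2 + t ^ 3 * (8 * rA t + t * deriv rA t) := rfl
    rw [e5, e1, e4]
    rw [e3] at e2
    linear_combination (-t^4 * α t) * e2 - t^4 * e6
  refine ⟨r1, fun t => rA t + r1 t + t * c4 t * rB t + c4 t ^ 2 * E (c t, t), hr1, by fun_prop, hce,
    ?_⟩
  filter_upwards [hce, hcc] with t e1 e2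
  rw [hgE]
  linear_combination t * e1 + (t ^ 5 * rB t + (c t + t ^ 4 * c4 t) * E (c t, t)) * e2

lemma bij_of_det (L : ℝ × ℝ →L[ℝ] ℝ × ℝ) (a b c d : ℝ) (h1 : L (1, 0) = (a, b))
    (h2 : L (0, 1) = (c, d)) (h : a * d - b * c ≠ 0) : Function.Bijective L := by
  have hL : ∀ x y, L (x, y) = (x * a + y * c, x * b + y * d) := by
    intro x y
    have : ((x, y) : ℝ × ℝ) = x • ((1:ℝ), (0:ℝ)) + y • ((0:ℝ), (1:ℝ)) := by simp
    rw [this, map_add, map_smul, map_smul, h1, h2]; simp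
  constructor
  · rintro ⟨x, y⟩ ⟨x', y'⟩ e
    rw [hL, hL] at e
    simp only [Prod.mk.injEq] at e
    obtain ⟨e1, e2⟩ := e
    have k1 : (a * d - b * c) * x = (a * d - b * c) * x' := by linear_combination d * e1 - c * e2
    have k2 : (a * d - b * c) * y = (a * d - b * c) * y' := by linear_combination a * e2 - b * e1
    rw [mul_left_cancel₀ h k1, mul_left_cancel₀ h k2]
  · rintro ⟨x, y⟩
    refine ⟨((d * x - c * y) / (a * d - b * c), (a * y - b * x) / (a * d - b * c)), ?_⟩
    rw [hL]
    ext <;> simp only <;> rw [div_mul_eq_mul_div, div_mul_eq_mul_div, ← add_div,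
      div_eq_iff h] <;> ring

lemma fderiv_pair (a b : ℝ × ℝ → ℝ) (ha : ContDiff ℝ ∞ a) (hb : ContDiff ℝ ∞ b) (p v : ℝ × ℝ) :
    fderiv ℝ (fun q => (a q, b q)) p v = (fderiv ℝ a p v, fderiv ℝ b p v) := by
  rw [((ha.differentiable (by simp) p).hasFDerivAt.prodMk
    (hb.differentiable (by simp) p).hasFDerivAt).fderiv]
  rfl

lemma pdx_hasDerivAt (g : ℝ × ℝ → ℝ) (hg : ContDiff ℝ ∞ g) (x y : ℝ) :
    HasDerivAt (fun t => g (t, y)) (pdx g (x, y)) x := by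
  have h1 := (hg.differentiable (by simp) (x, y)).hasFDerivAt
  exact h1.comp_hasDerivAt x ((hasDerivAt_id x).prodMk (hasDerivAt_const x y))

lemma curve_hasDerivAt (g : ℝ × ℝ → ℝ) (hg : ContDiff ℝ ∞ g) (a b : ℝ → ℝ) (a' b' t : ℝ)
    (ha : HasDerivAt a a' t) (hb : HasDerivAt b b' t) :
    HasDerivAt (fun s => g (a s, b s)) (a' * pdx g (a t, b t) + b' * pdy g (a t, b t)) t := by
  have h1 := (hg.differentiable (by simp) (a t, b t)).hasFDerivAt
  rw [← fderiv_split]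
  exact h1.comp_hasDerivAt t (ha.prodMk hb)

/-- Solving `w + w² R(y, u w) = K(x, y)`. -/
lemma solve_w (K u : ℝ × ℝ → ℝ) (R : ℝ × ℝ → ℝ) (hK : ContDiff ℝ ∞ K) (hu : ContDiff ℝ ∞ u)
    (hR : ContDiff ℝ ∞ R) (hu0 : u 0 = 0) (hR0 : R (0, 0) = 0) :
    ∃ w : ℝ × ℝ → ℝ, ContDiff ℝ ∞ w ∧ ∀ᶠ p in 𝓝 (0 : ℝ × ℝ),
      w p + w p ^ 2 * R (p.2, u p * w p) = K p := by
  let Q : (ℝ × ℝ) × ℝ → ℝ := fun q => q.2 + q.2 ^ 2 * R (q.1.2, u q.1 * q.2)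
  have hQ : ContDiff ℝ ∞ Q := by simp only [Q]; fun_prop
  have hQ0 : ∀ s, Q (0, s) = s := by intro s; simp [Q, hu0, hR0]
  set p0 : (ℝ × ℝ) × ℝ := (0, K 0) with hp0
  have hQd : fderiv ℝ Q p0 (0, 1) = 1 := by
    have h1 := (hQ.differentiable (by simp) p0).hasFDerivAt
    have h2 : HasDerivAt (fun s => Q (0, s)) (fderiv ℝ Q p0 (0, 1)) (K 0) :=
      h1.comp_hasDerivAt (K 0) ((hasDerivAt_const (K 0) (0 : ℝ × ℝ)).prodMk (hasDerivAt_id (K 0)))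
    have h3 : HasDerivAt (fun s => Q (0, s)) 1 (K 0) := by
      simp only [hQ0]; exact hasDerivAt_id' _
    exact h2.unique h3
  have hfd : ∀ v s, fderiv ℝ (fun q : (ℝ × ℝ) × ℝ => (q.1, Q q)) p0 (v, s) =
      (v, fderiv ℝ Q p0 (v, 0) + s) := by
    intro v s
    rw [(hasFDerivAt_fst.prodMk (hQ.differentiable (by simp) p0).hasFDerivAt).fderiv]
    have : ((v, s) : (ℝ × ℝ) × ℝ) = (v, 0) + s • ((0 : ℝ × ℝ), (1:ℝ)) := by simp
    rw [ContinuousLinearMap.prod_apply]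
    conv_lhs => rw [this, map_add, map_add, map_smul, map_smul, hQd]
    simp
  obtain ⟨θ, t1, t2, -, t4, -, -⟩ := smooth_inverse (fun q : (ℝ × ℝ) × ℝ => (q.1, Q q)) p0
    (by fun_prop) (by
      constructor
      · rintro ⟨v, s⟩ ⟨v', s'⟩ h
        rw [hfd, hfd] at h
        simp only [Prod.mk.injEq] at h
        obtain ⟨h1, h2⟩ := h
        subst h1
        have : s = s' := by linarith
        rw [this]
      · rintro ⟨v, s⟩
        exact ⟨(v, s - fderiv ℝ Q p0 (v, 0)), by rw [hfd]; simp⟩)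
  have e1 : ((p0.1, Q p0) : (ℝ × ℝ) × ℝ) = (0, K 0) := by simp [hp0, hQ0]
  simp only [e1] at t2 t4
  refine ⟨fun p => (θ (p, K p)).2, by fun_prop, ?_⟩
  have c1 : Tendsto (fun p : ℝ × ℝ => (p, K p)) (𝓝 0) (𝓝 (0, K 0)) := by
    have : Continuous (fun p : ℝ × ℝ => (p, K p)) := by have := hK.continuous; fun_prop
    exact this.tendsto 0
  filter_upwards [c1.eventually t4] with p hp
  simp only [Prod.mk.injEq] at hp
  have h2 := hp.2
  simp only [Q] at h2
  rw [hp.1] at h2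
  exact h2

lemma normal_diffeo (β : ℝ) (G : ℝ × ℝ → ℝ) (hG : ContDiff ℝ ∞ G)
    (h1 : ∀ᶠ t in 𝓝 (0:ℝ), G (-5 * t ^ 4 - 7 * β * t ^ 6, t) = -4 * t ^ 5 - 6 * β * t ^ 7)
    (h2 : ∀ᶠ t in 𝓝 (0:ℝ), pdy G (-5 * t ^ 4 - 7 * β * t ^ 6, t) = 0) :
    ∃ φ : ℝ × ℝ → ℝ × ℝ, ContDiff ℝ ∞ φ ∧ φ 0 = 0 ∧ Function.Bijective (fderiv ℝ φ 0) ∧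
      ∀ᶠ p in 𝓝 (0 : ℝ × ℝ), (p.1, G p) =
        ((φ p).1, (φ p).1 * (φ p).2 + (φ p).2 ^ 5 + β * (φ p).2 ^ 7) := by
  let c0 : ℝ → ℝ := fun t => -5 * t ^ 4 - 7 * β * t ^ 6
  have hc0 : ContDiff ℝ ∞ c0 := by simp only [c0]; fun_prop
  have hc0d : ∀ t, HasDerivAt c0 (-20 * t ^ 3 - 42 * β * t ^ 5) t := by
    intro t
    have := ((hasDerivAt_pow 4 t).const_mul (-5)).fun_sub ((hasDerivAt_pow 6 t).const_mul (7 * β))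
    have e : HasDerivAt c0 _ t := this
    refine e.congr_deriv ?_
    push_cast; ring
  let g0 : ℝ × ℝ → ℝ := fun p => p.1 * p.2 + p.2 ^ 5 + β * p.2 ^ 7
  have hg0 : ContDiff ℝ ∞ g0 := by simp only [g0]; fun_prop
  let D : ℝ × ℝ → ℝ := fun p => G p - g0 p
  have hD : ContDiff ℝ ∞ D := by simp only [D]; fun_prop
  have hDy : ∀ x y, pdy D (x, y) = pdy G (x, y) - (x + 5 * y ^ 4 + 7 * β * y ^ 6) := by
    intro x y
    have e1 := pdy_hasDerivAt D hD x y
    have e2 := pdy_hasDerivAt G hG x y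
    have e3 := ((((hasDerivAt_id' y).const_mul x).fun_add (hasDerivAt_pow 5 y)).fun_add
      ((hasDerivAt_pow 7 y).const_mul β))
    have e4 : HasDerivAt (fun t => D (x, t)) _ y := e2.fun_sub e3
    rw [e1.unique e4]; push_cast; ring
  have hD0 : ∀ᶠ t in 𝓝 (0:ℝ), D (c0 t, t) = 0 := by
    filter_upwards [h1] with t e
    simp only [D, g0, c0]; rw [e]; ring
  have hDy0 : ∀ᶠ t in 𝓝 (0:ℝ), pdy D (c0 t, t) = 0 := by
    filter_upwards [h2] with t e
    rw [hDy, show pdy G (c0 t, t) = 0 from e]; simp only [c0]; ring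
  have hDxs := pdx_contDiff D hD
  have hDx0 : ∀ᶠ t in 𝓝 (0:ℝ), pdx D (c0 t, t) = 0 := by
    have k1 : ∀ᶠ t in 𝓝 (0:ℝ), (-20 - 42 * β * t ^ 2) * pdx D (c0 t, t) = 0 := by
      apply cancel_pow 3 (fun t => (-20 - 42 * β * t ^ 2) * pdx D (c0 t, t))
      · have := hDxs.continuous; have := hc0.continuous; fun_prop
      · filter_upwards [hD0.eventually_nhds, hDy0] with t e1 e2
        have d1 := curve_hasDerivAt D hD c0 (fun s => s) _ _ t (hc0d t) (hasDerivAt_id' t)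
        have d2 : HasDerivAt (fun s => D (c0 s, s)) 0 t :=
          (hasDerivAt_const t (0:ℝ)).congr_of_eventuallyEq e1
        have d3 := d1.unique d2
        rw [e2] at d3
        linear_combination d3
    have k2 : ∀ᶠ t in 𝓝 (0:ℝ), -20 - 42 * β * t ^ 2 ≠ 0 := by
      have : Continuous fun t : ℝ => -20 - 42 * β * t ^ 2 := by fun_prop
      exact this.continuousAt.eventually_ne (by norm_num)
    filter_upwards [k1, k2] with t e1 e2
    exact (mul_eq_zero.1 e1).resolve_left e2
  -- straighten the curve
  let d : ℝ × ℝ → ℝ := fun q => D (q.1 + c0 q.2, q.2)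
  have hd : ContDiff ℝ ∞ d := by simp only [d]; fun_prop
  obtain ⟨d1, hd1, hd1e, hd1d⟩ := hadamard2 d hd
  obtain ⟨d2, hd2, hd2e, -⟩ := hadamard2 d1 hd1
  have hd10 : ∀ t, d1 (0, t) = pdx D (c0 t, t) := by
    intro t
    have e1 : d1 (0, t) = pdx d (0, t) := hd1d t
    rw [e1]
    have e2 := pdx_hasDerivAt d hd 0 t
    have e3 := curve_hasDerivAt D hD (fun s => s + c0 t) (fun _ => t) 1 0 0
      ((hasDerivAt_id' (0:ℝ)).add_const _) (hasDerivAt_const _ _)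
    have e4 := e2.unique e3
    simpa using e4
  let K : ℝ × ℝ → ℝ := fun p => d2 (p.1 - c0 p.2, p.2)
  have hK : ContDiff ℝ ∞ K := by simp only [K]; fun_prop
  let u : ℝ × ℝ → ℝ := fun p => p.1 - c0 p.2
  have hu : ContDiff ℝ ∞ u := by simp only [u]; fun_prop
  have hu0 : u 0 = 0 := by simp [u, c0]
  have csnd : Tendsto (fun p : ℝ × ℝ => p.2) (𝓝 0) (𝓝 0) := continuous_snd.tendsto (0 : ℝ × ℝ)
  have hDK : ∀ᶠ p in 𝓝 (0 : ℝ × ℝ), G p = g0 p + u p ^ 2 * K p := by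
    filter_upwards [csnd.eventually hD0, csnd.eventually hDx0] with p e1 e2
    have e3 := hd1e (u p) p.2
    have e4 := hd2e (u p) p.2
    have e5 : d (u p, p.2) = G p - g0 p := by simp [d, u, D]
    have e6 : d (0, p.2) = 0 := by simp only [d]; rw [zero_add]; exact e1
    have e7 := hd10 p.2
    rw [e2] at e7
    have e8 : K p = d2 (u p, p.2) := rfl
    rw [e5, e6] at e3
    rw [e7] at e4
    rw [e8]
    linear_combination e3 + u p * e4
  let R : ℝ × ℝ → ℝ := fun q => 10 * q.1 ^ 3 + 10 * q.1 ^ 2 * q.2 + 5 * q.1 * q.2 ^ 2 + q.2 ^ 3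
    + β * (21 * q.1 ^ 5 + 35 * q.1 ^ 4 * q.2 + 35 * q.1 ^ 3 * q.2 ^ 2 + 21 * q.1 ^ 2 * q.2 ^ 3
    + 7 * q.1 * q.2 ^ 4 + q.2 ^ 5)
  have hR : ContDiff ℝ ∞ R := by simp only [R]; fun_prop
  obtain ⟨w, hw, hwe⟩ := solve_w K u R hK hu hR hu0 (by simp [R])
  let φ2 : ℝ × ℝ → ℝ := fun p => p.2 + u p * w p
  have hφ2 : ContDiff ℝ ∞ φ2 := by simp only [φ2]; fun_prop
  have hphi_y : fderiv ℝ φ2 0 (0, 1) = 1 := by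
    have e1 : HasDerivAt (fun t => φ2 (0, t)) (pdy φ2 0) 0 := pdy_hasDerivAt φ2 hφ2 0 0
    have e2 : HasDerivAt (fun t => w (0, t)) (pdy w 0) 0 := pdy_hasDerivAt w hw 0 0
    have e3 := (hasDerivAt_id' (0:ℝ)).fun_add
      (((hasDerivAt_const (0:ℝ) (0:ℝ)).fun_sub (hc0d 0)).fun_mul e2)
    have e4 : HasDerivAt (fun t => φ2 (0, t)) _ 0 := e3
    have e5 := e1.unique e4
    have e6 : c0 0 = 0 := by simp [c0]
    have e7 : fderiv ℝ φ2 0 (0, 1) = pdy φ2 0 := rfl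
    rw [e7, e5, e6]; norm_num
  refine ⟨fun p => (p.1, φ2 p), by fun_prop, ?_, ?_, ?_⟩
  · simp [φ2, hu0]
  · refine bij_of_det _ 1 (fderiv ℝ φ2 0 (1, 0)) 0 1 ?_ ?_ (by norm_num)
    · rw [fderiv_pair _ _ contDiff_fst hφ2, fderiv_fst]; rfl
    · rw [fderiv_pair _ _ contDiff_fst hφ2, fderiv_fst, hphi_y]; rfl
  · filter_upwards [hDK, hwe] with p e1 e2
    refine Prod.ext rfl ?_
    change G p = p.1 * φ2 p + φ2 p ^ 5 + β * φ2 p ^ 7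
    rw [e1, ← e2]
    have e3 : u p = p.1 + 5 * p.2 ^ 4 + 7 * β * p.2 ^ 6 := by simp only [u, c0]; ring
    have e4 : φ2 p = p.2 + u p * w p := rfl
    have e5 : g0 p = p.1 * p.2 + p.2 ^ 5 + β * p.2 ^ 7 := rfl
    have e6 : ∀ y z, R (y, z) = 10 * y ^ 3 + 10 * y ^ 2 * z + 5 * y * z ^ 2 + z ^ 3
      + β * (21 * y ^ 5 + 35 * y ^ 4 * z + 35 * y ^ 3 * z ^ 2 + 21 * y ^ 2 * z ^ 3
      + 7 * y * z ^ 4 + z ^ 5) := fun y z => rfl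
    rw [e4, e5, e6]
    have e7 : u p ^ 2 * w p = (u p * w p) * (p.1 + 5 * p.2 ^ 4 + 7 * β * p.2 ^ 6) := by
      rw [← e3]; ring
    generalize hz : u p * w p = z at *
    rw [mul_add, e7, ← mul_assoc, ← mul_pow, hz]
    ring

lemma tendsto_of_cont {E F : Type*} [TopologicalSpace E] [TopologicalSpace F] [Zero E] [Zero F]
    {f : E → F} (hf : Continuous f) (h0 : f 0 = 0) : Tendsto f (𝓝 0) (𝓝 0) := by
  have := hf.tendsto 0; rwa [h0] at this

lemma CEq_to_AEquiv (g : ℝ × ℝ → ℝ) (hg : ContDiff ℝ ∞ g) (hg0 : g 0 = 0) (hgx : pdx g 0 = 0)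
    (c : ℝ → ℝ) (hc : CritData g c) (β : ℝ)
    (h : CEq (fun t => (c t, g (c t, t)))
      (fun t => (-5 * t ^ 4 - 7 * β * t ^ 6, -4 * t ^ 5 - 6 * β * t ^ 7))) :
    AEquiv (fun p => (p.1, g p)) (fun p => (p.1, p.1 * p.2 + p.2 ^ 5 + β * p.2 ^ 7)) := by
  obtain ⟨hcs, hc0, hc1, -⟩ := hc
  obtain ⟨ψ, τ, hψ, hτ, hψ0, hτ0, hb, ht, hd, he⟩ := h
  obtain ⟨σ, hσ, hσ0, hσd, hσ1, hσ2⟩ := inverse1 τ hτ hτ0 hd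
  have hgy0 : pdy g 0 = 0 := by
    have := hc1.self_of_nhds
    rw [hc0] at this; exact this
  let F1 : ℝ × ℝ → ℝ := fun p => (ψ (p.1, g p)).1
  let F2 : ℝ × ℝ → ℝ := fun p => (ψ (p.1, g p)).2
  have hF1 : ContDiff ℝ ∞ F1 := by simp only [F1]; fun_prop
  have hF2 : ContDiff ℝ ∞ F2 := by simp only [F2]; fun_prop
  have e00 : ((0:ℝ), (0:ℝ)) = 0 := rfl
  have hF10 : F1 0 = 0 := by simp [F1, hg0, e00, hψ0]
  have hψd : ∀ q, HasFDerivAt ψ (fderiv ℝ ψ q) q := fun q => (hψ.differentiable (by simp) q).hasFDerivAt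
  have hFd : ∀ p v, fderiv ℝ (fun p : ℝ × ℝ => ψ (p.1, g p)) p v =
      fderiv ℝ ψ (p.1, g p) (v.1, fderiv ℝ g p v) := by
    intro p v
    have k := (hψd (p.1, g p)).comp p
      (hasFDerivAt_fst.prodMk (hg.differentiable (by simp) p).hasFDerivAt)
    have k' : HasFDerivAt (fun p : ℝ × ℝ => ψ (p.1, g p)) _ p := k
    rw [k'.fderiv]; rfl
  have hFs : ContDiff ℝ ∞ (fun p : ℝ × ℝ => ψ (p.1, g p)) := by fun_prop
  have hF1d : ∀ p v, fderiv ℝ F1 p v = (fderiv ℝ ψ (p.1, g p) (v.1, fderiv ℝ g p v)).1 := by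
    intro p v
    rw [← hFd]
    have k : HasFDerivAt F1 _ p := (hFs.differentiable (by simp) p).hasFDerivAt.fst
    rw [k.fderiv]; rfl
  have hF2d : ∀ p v, fderiv ℝ F2 p v = (fderiv ℝ ψ (p.1, g p) (v.1, fderiv ℝ g p v)).2 := by
    intro p v
    rw [← hFd]
    have k : HasFDerivAt F2 _ p := (hFs.differentiable (by simp) p).hasFDerivAt.snd
    rw [k.fderiv]; rfl
  have hF1y : ∀ p, pdy g p = 0 → pdy F1 p = 0 := by
    intro p hp
    have : pdy F1 p = (fderiv ℝ ψ (p.1, g p) (0, pdy g p)).1 := hF1d p (0, 1)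
    rw [this, hp, e00, map_zero]; rfl
  have hF2y : ∀ p, pdy g p = 0 → pdy F2 p = 0 := by
    intro p hp
    have : pdy F2 p = (fderiv ℝ ψ (p.1, g p) (0, pdy g p)).2 := hF2d p (0, 1)
    rw [this, hp, e00, map_zero]; rfl
  have hF1x : pdx F1 0 ≠ 0 := by
    have k : pdx F1 0 = (fderiv ℝ ψ ((0 : ℝ × ℝ).1, g 0) (1, pdx g 0)).1 := hF1d 0 (1, 0)
    rw [hgx, hg0, Prod.fst_zero, e00] at k
    rw [k]
    intro h
    have h3 : fderiv ℝ ψ 0 (1, 0) = fderiv ℝ ψ 0 0 := by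
      rw [map_zero]; exact Prod.ext h ht
    have := congrArg Prod.fst (hb.1 h3)
    simp at this
  let Θ : ℝ × ℝ → ℝ × ℝ := fun p => (F1 p, σ p.2)
  have hΘ : ContDiff ℝ ∞ Θ := by simp only [Θ]; fun_prop
  have hΘ0 : Θ 0 = 0 := by simp [Θ, hF10, hσ0]
  have hσs : ContDiff ℝ ∞ (fun p : ℝ × ℝ => σ p.2) := by fun_prop
  have hσx : pdx (fun p : ℝ × ℝ => σ p.2) 0 = 0 := by
    have k := pdx_hasDerivAt _ hσs 0 0
    exact k.unique (hasDerivAt_const (0:ℝ) (σ 0))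
  have hσy : pdy (fun p : ℝ × ℝ => σ p.2) 0 = deriv σ 0 := by
    have k := pdy_hasDerivAt _ hσs 0 0
    exact k.unique (hσ.differentiable (by simp) 0).hasDerivAt
  obtain ⟨θ, t1, t2, t3, t4, t5, -⟩ := smooth_inverse Θ 0 hΘ (by
    refine bij_of_det _ (pdx F1 0) 0 0 (deriv σ 0) ?_ ?_ ?_
    · simp only [Θ]
      rw [fderiv_pair _ _ hF1 hσs]; exact Prod.ext rfl hσx
    · simp only [Θ]
      rw [fderiv_pair _ _ hF1 hσs]; exact Prod.ext (hF1y 0 hgy0) hσy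
    · rw [zero_mul, sub_zero]; exact mul_ne_zero hF1x hσd)
  rw [hΘ0] at t2 t4 t5
  let G : ℝ × ℝ → ℝ := fun p => F2 (θ p)
  have hG : ContDiff ℝ ∞ G := by simp only [G]; fun_prop
  have hcτ : Tendsto (fun t => (c (τ t), τ t)) (𝓝 0) (𝓝 (0 : ℝ × ℝ)) := by
    apply tendsto_of_cont
    · have := hcs.continuous; have := hτ.continuous; fun_prop
    · simp [hτ0, hc0]
  have hτt : Tendsto τ (𝓝 0) (𝓝 0) := tendsto_of_cont hτ.continuous hτ0
  have hΘc : ∀ᶠ t in 𝓝 (0:ℝ), Θ (c (τ t), τ t) = (-5 * t ^ 4 - 7 * β * t ^ 6, t) := by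
    filter_upwards [he, hσ1] with t e1 e2
    have e3 := congrArg Prod.fst e1
    exact Prod.ext e3 e2
  have hN1 : ∀ᶠ t in 𝓝 (0:ℝ), G (-5 * t ^ 4 - 7 * β * t ^ 6, t) = -4 * t ^ 5 - 6 * β * t ^ 7 := by
    filter_upwards [he, hΘc, hcτ.eventually t3] with t e1 e2 e3
    rw [e2] at e3
    simp only [G]
    rw [e3]
    exact congrArg Prod.snd e1
  have hN2 : ∀ᶠ t in 𝓝 (0:ℝ), pdy G (-5 * t ^ 4 - 7 * β * t ^ 6, t) = 0 := by
    have k1 : ∀ᶠ s in 𝓝 (0:ℝ), deriv σ s ≠ 0 :=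
      (contDiff_deriv_infty hσ).continuous.continuousAt.eventually_ne hσd
    filter_upwards [hΘc, hcτ.eventually t3.eventually_nhds, hτt.eventually k1,
      hτt.eventually hc1] with t e2 e3 e4 e5
    have l1 : HasDerivAt (fun s => F2 (c (τ t), s)) (pdy F2 (c (τ t), τ t)) (τ t) :=
      pdy_hasDerivAt F2 hF2 _ _
    rw [hF2y _ e5] at l1
    have l2 := curve_hasDerivAt G hG (fun s => F1 (c (τ t), s)) σ _ _ (τ t)
      (pdy_hasDerivAt F1 hF1 (c (τ t)) (τ t)) (hσ.differentiable (by simp) (τ t)).hasDerivAt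
    have l3 : (fun s => F2 (c (τ t), s)) =ᶠ[𝓝 (τ t)] fun s => G (F1 (c (τ t), s), σ s) := by
      have k2 : Tendsto (fun s => (c (τ t), s)) (𝓝 (τ t)) (𝓝 (c (τ t), τ t)) := by
        have : Continuous (fun s : ℝ => (c (τ t), s)) := by fun_prop
        exact this.tendsto _
      filter_upwards [k2.eventually e3] with s hs
      have : G (Θ (c (τ t), s)) = F2 (c (τ t), s) := by simp only [G]; rw [hs]
      exact this.symm
    have l4 := (l1.congr_of_eventuallyEq l3.symm).unique l2
    rw [hF1y _ e5, zero_mul, zero_add] at l4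
    have l5 : pdy G (Θ (c (τ t), τ t)) = 0 := (mul_eq_zero.1 l4.symm).resolve_left e4
    rw [e2] at l5
    exact l5
  obtain ⟨φ, hφ, hφ0, hφb, hφe⟩ := normal_diffeo β G hG hN1 hN2
  obtain ⟨χ, x1, x2, x3, x4, x5, -⟩ := smooth_inverse φ 0 hφ hφb
  rw [hφ0] at x2 x4 x5
  refine ⟨θ ∘ χ, ψ, t1.comp x1, hψ, by simp [x2, t2], hψ0, ?_, hb, ?_⟩
  · rw [fderiv_comp 0 (t1.differentiable (by simp) _) (x1.differentiable (by simp) _), x2]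
    exact t5.comp x5
  · have cχ : Tendsto χ (𝓝 0) (𝓝 0) := tendsto_of_cont x1.continuous x2
    filter_upwards [x4, cχ.eventually hφe, cχ.eventually t4] with p e1 e2 e3
    rw [e1] at e2
    rw [← e2]
    refine Prod.ext ?_ rfl
    have e4 := congrArg Prod.fst e3
    exact e4

lemma AEquiv_to_CEq (g : ℝ × ℝ → ℝ) (hg : ContDiff ℝ ∞ g) (hg0 : g 0 = 0) (hgx : pdx g 0 = 0)
    (c : ℝ → ℝ) (hc : CritData g c) (β : ℝ)
    (h : AEquiv (fun p => (p.1, g p)) (fun p => (p.1, p.1 * p.2 + p.2 ^ 5 + β * p.2 ^ 7))) :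
    CEq (fun t => (c t, g (c t, t)))
      (fun t => (-5 * t ^ 4 - 7 * β * t ^ 6, -4 * t ^ 5 - 6 * β * t ^ 7)) := by
  obtain ⟨hcs, hc0, hc1, hc2⟩ := hc
  have hgy0 : pdy g 0 = 0 := by
    have := hc1.self_of_nhds
    rw [hc0] at this; exact this
  obtain ⟨φ, ψ, hφ, hψ, hφ0, hψ0, hφb, hψb, he⟩ := h
  have e00 : ((0:ℝ), (0:ℝ)) = 0 := rfl
  have hg0s : ContDiff ℝ ∞ (fun p : ℝ × ℝ => p.1 * p.2 + p.2 ^ 5 + β * p.2 ^ 7) := by fun_prop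
  have hGy : ∀ x y, pdy (fun p : ℝ × ℝ => p.1 * p.2 + p.2 ^ 5 + β * p.2 ^ 7) (x, y) =
      x + 5 * y ^ 4 + 7 * β * y ^ 6 := by
    intro x y
    have e3 := ((((hasDerivAt_id' y).const_mul x).fun_add (hasDerivAt_pow 5 y)).fun_add
      ((hasDerivAt_pow 7 y).const_mul β))
    rw [(pdy_hasDerivAt _ hg0s x y).unique e3]; push_cast; ring
  have hGx : pdx (fun p : ℝ × ℝ => p.1 * p.2 + p.2 ^ 5 + β * p.2 ^ 7) 0 = 0 := by
    have k := pdx_hasDerivAt _ hg0s 0 0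
    have k2 : HasDerivAt (fun t : ℝ => t * 0 + 0 ^ 5 + β * 0 ^ 7) 0 (0:ℝ) := by
      simpa using hasDerivAt_const (0:ℝ) (0:ℝ)
    exact k.unique k2
  let f : ℝ × ℝ → ℝ × ℝ := fun p => (p.1, g p)
  have hf : ContDiff ℝ ∞ f := by simp only [f]; fun_prop
  have hfd : ∀ p v, fderiv ℝ f p v = (v.1, fderiv ℝ g p v) := by
    intro p v
    simp only [f]
    rw [fderiv_pair _ _ contDiff_fst hg, fderiv_fst]; rfl
  have hcomp : ∀ p v, fderiv ℝ (fun p => ψ (f (φ p))) p v =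
      fderiv ℝ ψ (f (φ p)) (fderiv ℝ f (φ p) (fderiv ℝ φ p v)) := by
    intro p v
    have k := ((hψ.differentiable (by simp) (f (φ p))).hasFDerivAt.comp (φ p)
      (hf.differentiable (by simp) (φ p)).hasFDerivAt).comp p
      (hφ.differentiable (by simp) p).hasFDerivAt
    have k' : HasFDerivAt (fun p => ψ (f (φ p))) _ p := k
    rw [k'.fderiv]; rfl
  -- the derivative identity near the origin
  have hder : ∀ᶠ p in 𝓝 (0 : ℝ × ℝ), ∀ v,
      fderiv ℝ ψ (f (φ p)) ((fderiv ℝ φ p v).1, fderiv ℝ g (φ p) (fderiv ℝ φ p v)) =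
        (v.1, fderiv ℝ (fun p : ℝ × ℝ => p.1 * p.2 + p.2 ^ 5 + β * p.2 ^ 7) p v) := by
    filter_upwards [he.eventually_nhds] with p hp v
    have k1 : (fun p => ψ (f (φ p))) =ᶠ[𝓝 p] fun p => (p.1, p.1 * p.2 + p.2 ^ 5 + β * p.2 ^ 7) := hp
    have k2 := congrArg (fun L : ℝ × ℝ →L[ℝ] ℝ × ℝ => L v) k1.fderiv_eq
    rw [hcomp, hfd, fderiv_pair _ _ contDiff_fst hg0s, fderiv_fst] at k2
    exact k2
  have hψinj : ∀ᶠ p in 𝓝 (0 : ℝ × ℝ), ∀ v, fderiv ℝ ψ (f (φ p)) v = 0 → v = 0 := by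
    obtain ⟨Ψ, y1, y2, y3, y4, y5, y6⟩ := smooth_inverse ψ 0 hψ hψb
    have k1 : ∀ᶠ q in 𝓝 (0 : ℝ × ℝ), ∀ v, fderiv ℝ ψ q v = 0 → v = 0 := by
      filter_upwards [y3.eventually_nhds] with q hq v hv
      have k2 := ((y1.differentiable (by simp) (ψ q)).hasFDerivAt.comp q
        (hψ.differentiable (by simp) q).hasFDerivAt)
      have k3 : HasFDerivAt (fun q => Ψ (ψ q)) (ContinuousLinearMap.id ℝ (ℝ × ℝ)) q :=
        (hasFDerivAt_id q).congr_of_eventuallyEq hq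
      have k4 := congrArg (fun L : ℝ × ℝ →L[ℝ] ℝ × ℝ => L v) (k2.unique k3)
      simp only [ContinuousLinearMap.comp_apply, hv, map_zero] at k4
      exact k4.symm
    have k2 : Tendsto (fun p => f (φ p)) (𝓝 0) (𝓝 0) := by
      apply tendsto_of_cont (hf.continuous.comp hφ.continuous)
      simp [f, hφ0, hg0]
    exact k2.eventually k1
  -- the null direction at critical points
  have hnull : ∀ᶠ p in 𝓝 (0 : ℝ × ℝ), p.1 + 5 * p.2 ^ 4 + 7 * β * p.2 ^ 6 = 0 →
      (fderiv ℝ φ p (0, 1)).1 = 0 ∧ (fderiv ℝ φ p (0, 1)).2 * pdy g (φ p) = 0 := by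
    filter_upwards [hder, hψinj] with p h1 h2 h3
    have k1 := h1 (0, 1)
    have k2 : fderiv ℝ (fun p : ℝ × ℝ => p.1 * p.2 + p.2 ^ 5 + β * p.2 ^ 7) p (0, 1) = 0 := by
      exact (hGy p.1 p.2).trans h3
    rw [k2] at k1
    have k3 := h2 _ k1
    have k4 := congrArg Prod.fst k3
    have k5 := congrArg Prod.snd k3
    simp only [Prod.fst_zero, Prod.snd_zero] at k4 k5
    refine ⟨k4, ?_⟩
    have k6 : fderiv ℝ φ p (0, 1) = (0, (fderiv ℝ φ p (0, 1)).2) := Prod.ext k4 rfl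
    rw [k6, fderiv_split, zero_mul, zero_add] at k5
    exact k5
  let c0 : ℝ → ℝ := fun t => -5 * t ^ 4 - 7 * β * t ^ 6
  have hc0s : ContDiff ℝ ∞ c0 := by simp only [c0]; fun_prop
  have hc0t : Tendsto (fun t => (c0 t, t)) (𝓝 0) (𝓝 (0 : ℝ × ℝ)) := by
    apply tendsto_of_cont
    · have := hc0s.continuous; fun_prop
    · simp [c0]
  have hn0 : (fderiv ℝ φ 0 (0, 1)).1 = 0 := (hnull.self_of_nhds (by simp)).1
  have hn2 : (fderiv ℝ φ 0 (0, 1)).2 ≠ 0 := by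
    intro h
    have h3 : fderiv ℝ φ 0 (0, 1) = fderiv ℝ φ 0 0 := by
      rw [map_zero]; exact Prod.ext hn0 h
    have := congrArg Prod.snd (hφb.1 h3)
    simp at this
  let τ : ℝ → ℝ := fun t => (φ (c0 t, t)).2
  have hτ : ContDiff ℝ ∞ τ := by simp only [τ]; fun_prop
  have hc00 : c0 0 = 0 := by simp [c0]
  have hτ0 : τ 0 = 0 := by simp [τ, hc00, e00, hφ0]
  have hφ2 : ContDiff ℝ ∞ (fun p => (φ p).2) := by fun_prop
  have hphi_d : pdy (fun p => (φ p).2) 0 = (fderiv ℝ φ 0 (0, 1)).2 := by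
    have k : HasFDerivAt (fun p => (φ p).2) _ 0 := (hφ.differentiable (by simp) 0).hasFDerivAt.snd
    unfold pdy dop
    rw [k.fderiv]; rfl
  have hτd : deriv τ 0 ≠ 0 := by
    have hcd : HasDerivAt c0 0 0 := by
      have := ((hasDerivAt_pow 4 (0:ℝ)).const_mul (-5)).fun_sub
        ((hasDerivAt_pow 6 (0:ℝ)).const_mul (7 * β))
      have e : HasDerivAt c0 _ 0 := this
      refine e.congr_deriv ?_
      norm_num
    have k := curve_hasDerivAt _ hφ2 c0 (fun s => s) _ _ 0 hcd (hasDerivAt_id' 0)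
    have k2 : HasDerivAt τ _ 0 := k
    rw [k2.deriv, zero_mul, zero_add, one_mul, hc00, e00, hphi_d]
    exact hn2
  -- φ maps the critical set into the critical set
  have hφcrit : ∀ᶠ t in 𝓝 (0:ℝ), φ (c0 t, t) = (c (τ t), τ t) := by
    have k1 : ∀ᶠ p in 𝓝 (0 : ℝ × ℝ), (fderiv ℝ φ p (0, 1)).2 ≠ 0 := by
      have k2 : Continuous (fun p => (fderiv ℝ φ p (0, 1)).2) :=
        (((hφ.fderiv_right (m := ∞) (by simp)).clm_apply contDiff_const).continuous).snd
      exact k2.continuousAt.eventually_ne hn2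
    have k3 : Tendsto φ (𝓝 0) (𝓝 0) := tendsto_of_cont hφ.continuous hφ0
    filter_upwards [hc0t.eventually hnull, hc0t.eventually k1,
      hc0t.eventually (k3.eventually hc2)] with t e1 e2 e3
    have e4 := (e1 (by simp only [c0]; ring)).2
    exact Prod.ext (e3 ((mul_eq_zero.1 e4).resolve_left e2)) rfl
  refine ⟨ψ, τ, hψ, hτ, hψ0, hτ0, hψb, ?_, hτd, ?_⟩
  · -- triangularity
    obtain ⟨v, hv⟩ := hφb.2 (1, 0)
    have k1 := hder.self_of_nhds v
    have hf0 : f 0 = 0 := by simp [f, hg0]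
    rw [hφ0, hf0, hv, show fderiv ℝ g 0 (1, 0) = 0 from hgx] at k1
    rw [k1]
    have k2 : pdy (fun p : ℝ × ℝ => p.1 * p.2 + p.2 ^ 5 + β * p.2 ^ 7) 0 = 0 := by
      have := hGy 0 0
      rw [e00] at this; rw [this]; simp
    change fderiv ℝ (fun p : ℝ × ℝ => p.1 * p.2 + p.2 ^ 5 + β * p.2 ^ 7) 0 (v.1, v.2) = 0
    rw [fderiv_split, hGx, k2]; simp
  · filter_upwards [hφcrit, hc0t.eventually he] with t e1 e2
    simp only [e1] at e2
    rw [e2]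
    refine Prod.ext rfl ?_
    simp only [c0]; ring

lemma model_normal (β : ℝ) :
    CEq (fun t => (-5 * t ^ 4 - 7 * β * t ^ 6, -4 * t ^ 5 - 6 * β * t ^ 7)) (NC (-β / 4)) := by
  have h := curve_normal 0 β (fun t => -5 * t ^ 4 - 7 * β * t ^ 6)
    (fun t => -4 * t ^ 5 - 6 * β * t ^ 7) (fun _ => 0) (fun _ => 0) contDiff_const contDiff_const
    (Eventually.of_forall fun t => by ring) (Eventually.of_forall fun t => by ring)
  have e : -(β - 5 / 8 * (0:ℝ) ^ 2) / 4 = -β / 4 := by ring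
  rwa [e] at h

/-- Main reduction: equivalence with a model germ is equivalence of normal form curves. -/
lemma equiv_iff (g : ℝ × ℝ → ℝ) (hg : ContDiff ℝ ∞ g)
    (h0 : ∀ j < 5, tcoeff g 0 j = 0) (h05 : tcoeff g 0 5 = 1) (h10 : tcoeff g 1 0 = 0)
    (h11 : tcoeff g 1 1 = 1) (h1 : ∀ j, 2 ≤ j → j < 5 → tcoeff g 1 j = 0) (β : ℝ) :
    AEquiv (fun p => (p.1, g p)) (fun p => (p.1, p.1 * p.2 + p.2 ^ 5 + β * p.2 ^ 7)) ↔
      CEq (NC (-(tcoeff g 0 7 - 5 / 8 * tcoeff g 0 6 ^ 2) / 4)) (NC (-β / 4)) := by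
  have hg0 : g 0 = 0 := by
    have := h0 0 (by norm_num); simpa [tcoeff] using this
  have hgy : pdy g 0 = 0 := by
    have := h0 1 (by norm_num); simpa [tcoeff] using this
  have hgx : pdx g 0 = 0 := by simpa [tcoeff] using h10
  have hgxy : pdx (pdy g) 0 = 1 := by simpa [tcoeff] using h11
  obtain ⟨c, hc⟩ := crit_exists g hg hgy (by rw [hgxy]; norm_num)
  obtain ⟨r1, r2, hr1, hr2, e1, e2⟩ := crit_expand g hg h0 h05 h10 h11 h1 c hc
  have hn := curve_normal _ _ c (fun t => g (c t, t)) r1 r2 hr1 hr2 e1 e2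
  have hm := model_normal β
  have hcs := hc.1.continuous
  have hgc := hg.continuous
  have hn' := hn.symm (by fun_prop) (by
    have e0 : ((0:ℝ), (0:ℝ)) = 0 := rfl
    simp only [hc.2.1]; rw [e0, hg0]; rfl)
  have hm' := hm.symm (by fun_prop) (by simp)
  constructor
  · intro h
    exact hn'.trans ((AEquiv_to_CEq g hg hg0 hgx c hc β h).trans hm)
  · intro h
    exact CEq_to_AEquiv g hg hg0 hgx c hc β (hn.trans (h.trans hm'))

theorem stmt3 (f : ℝ × ℝ → ℝ × ℝ) (g : ℝ × ℝ → ℝ) (hf0 : f 0 = 0)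
    (hform : HasForm f g 6 (fun i j => if (i, j) = (1, 1) ∨ (i, j) = (0, 5) then 1 else 0)) :
    (tcoeff g 0 7 - 5 / 8 * tcoeff g 0 6 ^ 2 ≠ 0 ↔
      ∃ ε : ℝ, (ε = 1 ∨ ε = -1) ∧
        AEquiv f (fun p => (p.1, p.1 * p.2 + p.2 ^ 5 + ε * p.2 ^ 7))) ∧
    (tcoeff g 0 7 - 5 / 8 * tcoeff g 0 6 ^ 2 = 0 ↔
      AEquiv f (fun p => (p.1, p.1 * p.2 + p.2 ^ 5))) := by
  obtain ⟨hg, hf, hco⟩ := hform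
  have hf' : f = fun p => (p.1, g p) := funext hf
  subst hf'
  have key := equiv_iff g hg
    (by
      intro j hj
      rw [hco 0 j (by omega)]
      have : j ≠ 5 := by omega
      simp [this])
    (by rw [hco 0 5 (by norm_num)]; simp)
    (by rw [hco 1 0 (by norm_num)]; simp)
    (by rw [hco 1 1 (by norm_num)]; simp)
    (by
      intro j h2 hj
      rw [hco 1 j (by omega)]
      have : j ≠ 1 := by omega
      simp [this])
  set I := tcoeff g 0 7 - 5 / 8 * tcoeff g 0 6 ^ 2 with hI
  have hzero : (fun p : ℝ × ℝ => (p.1, p.1 * p.2 + p.2 ^ 5)) =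
      fun p => (p.1, p.1 * p.2 + p.2 ^ 5 + 0 * p.2 ^ 7) := by
    funext p; simp
  rw [hzero, key 0]
  have n0 : NC (-(0:ℝ) / 4) = NC 0 := by norm_num
  rw [n0]
  refine ⟨⟨fun hne => ?_, ?_⟩, fun h => ?_, fun h => ?_⟩
  · obtain ⟨ε, hε, hpos⟩ : ∃ ε : ℝ, (ε = 1 ∨ ε = -1) ∧ 0 < ε / I := by
      rcases lt_or_gt_of_ne hne with h | h
      · exact ⟨-1, Or.inr rfl, div_pos_of_neg_of_neg (by norm_num) h⟩
      · exact ⟨1, Or.inl rfl, by positivity⟩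
    refine ⟨ε, hε, (key ε).2 ?_⟩
    have hs := NC_scale (-I / 4) (Real.sqrt (ε / I)) (Real.sqrt_pos.2 hpos).ne'
    rw [Real.sq_sqrt hpos.le] at hs
    have e : -I / 4 * (ε / I) = -ε / 4 := by field_simp
    rwa [e] at hs
  · rintro ⟨ε, hε, h⟩ h0
    have h1 := (key ε).1 h
    rw [h0, n0] at h1
    have h2 := NC_noneq _ (h1.symm (NC_cont _) (NC_zero _))
    rcases hε with rfl | rfl <;> norm_num at h2
  · rw [h, n0]
    simpa using NC_scale 0 1 one_ne_zero
  · have := NC_noneq _ h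
    linarith
end
end

section
/- For all real numbers c, d, e, the polynomial maps F(x,y) = (x, xy + y⁶ + cy⁷ + dy⁸ + ey⁹) and G(x,y) = (x, xy + y⁶ + (d − (3/5)c²)y⁸ + (e − (7/5)cd + (14/25)c³)y⁹) have A⁹-equivalent 9-jets at the origin: j⁹F(0) ∼_{A⁹} j⁹G(0). -/
open Filter Topology

noncomputable section

/-- The truncated geometric series `1 + a y + ... + a^8 y^8`. -/
def vv (a y : ℝ) : ℝ := (a*y)^0 + (a*y)^1 + (a*y)^2 + (a*y)^3 + (a*y)^4 + (a*y)^5 + (a*y)^6 + (a*y)^7 + (a*y)^8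

def S6 (a y : ℝ) : ℝ := (a*y)^0 + (a*y)^1 + (a*y)^2 + (a*y)^3
def A6 (a y : ℝ) : ℝ := (a^4*y^0 + a^5*y^1 + a^6*y^2 + a^7*y^3 + a^8*y^4) * (vv a y^0*S6 a y^5 + vv a y^1*S6 a y^4 + vv a y^2*S6 a y^3 + vv a y^3*S6 a y^2 + vv a y^4*S6 a y^1 + vv a y^5*S6 a y^0) + (120*a^4*y^0 + 216*a^5*y^1 + 336*a^6*y^2 + 456*a^7*y^3 + 546*a^8*y^4 + 580*a^9*y^5 + 546*a^10*y^6 + 456*a^11*y^7 + 336*a^12*y^8 + 216*a^13*y^9 + 120*a^14*y^10 + 56*a^15*y^11 + 21*a^16*y^12 + 6*a^17*y^13 + 1*a^18*y^14)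
lemma hA6 (a y : ℝ) : vv a y^6 = 1*(a*y)^0 + 6*(a*y)^1 + 21*(a*y)^2 + 56*(a*y)^3 + y^4 * A6 a y := by
  have h : vv a y - S6 a y = y^4 * (a^4*y^0 + a^5*y^1 + a^6*y^2 + a^7*y^3 + a^8*y^4) := by unfold vv S6; ring
  have h2 : S6 a y^6 = 1*(a*y)^0 + 6*(a*y)^1 + 21*(a*y)^2 + 56*(a*y)^3 + y^4 * (120*a^4*y^0 + 216*a^5*y^1 + 336*a^6*y^2 + 456*a^7*y^3 + 546*a^8*y^4 + 580*a^9*y^5 + 546*a^10*y^6 + 456*a^11*y^7 + 336*a^12*y^8 + 216*a^13*y^9 + 120*a^14*y^10 + 56*a^15*y^11 + 21*a^16*y^12 + 6*a^17*y^13 + 1*a^18*y^14) := by unfold S6; ring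
  unfold A6
  linear_combination h2 + (vv a y^0*S6 a y^5 + vv a y^1*S6 a y^4 + vv a y^2*S6 a y^3 + vv a y^3*S6 a y^2 + vv a y^4*S6 a y^1 + vv a y^5*S6 a y^0) * h
lemma cA6 (a : ℝ) : ContDiff ℝ (⊤ : ℕ∞) (fun p : ℝ × ℝ => A6 a p.2) := by
  unfold A6 S6 vv; fun_prop

def S7 (a y : ℝ) : ℝ := (a*y)^0 + (a*y)^1 + (a*y)^2
def A7 (a y : ℝ) : ℝ := (a^3*y^0 + a^4*y^1 + a^5*y^2 + a^6*y^3 + a^7*y^4 + a^8*y^5) * (vv a y^0*S7 a y^6 + vv a y^1*S7 a y^5 + vv a y^2*S7 a y^4 + vv a y^3*S7 a y^3 + vv a y^4*S7 a y^2 + vv a y^5*S7 a y^1 + vv a y^6*S7 a y^0) + (77*a^3*y^0 + 161*a^4*y^1 + 266*a^5*y^2 + 357*a^6*y^3 + 393*a^7*y^4 + 357*a^8*y^5 + 266*a^9*y^6 + 161*a^10*y^7 + 77*a^11*y^8 + 28*a^12*y^9 + 7*a^13*y^10 + 1*a^14*y^11)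
lemma hA7 (a y : ℝ) : vv a y^7 = 1*(a*y)^0 + 7*(a*y)^1 + 28*(a*y)^2 + y^3 * A7 a y := by
  have h : vv a y - S7 a y = y^3 * (a^3*y^0 + a^4*y^1 + a^5*y^2 + a^6*y^3 + a^7*y^4 + a^8*y^5) := by unfold vv S7; ring
  have h2 : S7 a y^7 = 1*(a*y)^0 + 7*(a*y)^1 + 28*(a*y)^2 + y^3 * (77*a^3*y^0 + 161*a^4*y^1 + 266*a^5*y^2 + 357*a^6*y^3 + 393*a^7*y^4 + 357*a^8*y^5 + 266*a^9*y^6 + 161*a^10*y^7 + 77*a^11*y^8 + 28*a^12*y^9 + 7*a^13*y^10 + 1*a^14*y^11) := by unfold S7; ring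
  unfold A7
  linear_combination h2 + (vv a y^0*S7 a y^6 + vv a y^1*S7 a y^5 + vv a y^2*S7 a y^4 + vv a y^3*S7 a y^3 + vv a y^4*S7 a y^2 + vv a y^5*S7 a y^1 + vv a y^6*S7 a y^0) * h
lemma cA7 (a : ℝ) : ContDiff ℝ (⊤ : ℕ∞) (fun p : ℝ × ℝ => A7 a p.2) := by
  unfold A7 S7 vv; fun_prop

def S8 (a y : ℝ) : ℝ := (a*y)^0 + (a*y)^1
def A8 (a y : ℝ) : ℝ := (a^2*y^0 + a^3*y^1 + a^4*y^2 + a^5*y^3 + a^6*y^4 + a^7*y^5 + a^8*y^6) * (vv a y^0*S8 a y^7 + vv a y^1*S8 a y^6 + vv a y^2*S8 a y^5 + vv a y^3*S8 a y^4 + vv a y^4*S8 a y^3 + vv a y^5*S8 a y^2 + vv a y^6*S8 a y^1 + vv a y^7*S8 a y^0) + (28*a^2*y^0 + 56*a^3*y^1 + 70*a^4*y^2 + 56*a^5*y^3 + 28*a^6*y^4 + 8*a^7*y^5 + 1*a^8*y^6)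
lemma hA8 (a y : ℝ) : vv a y^8 = 1*(a*y)^0 + 8*(a*y)^1 + y^2 * A8 a y := by
  have h : vv a y - S8 a y = y^2 * (a^2*y^0 + a^3*y^1 + a^4*y^2 + a^5*y^3 + a^6*y^4 + a^7*y^5 + a^8*y^6) := by unfold vv S8; ring
  have h2 : S8 a y^8 = 1*(a*y)^0 + 8*(a*y)^1 + y^2 * (28*a^2*y^0 + 56*a^3*y^1 + 70*a^4*y^2 + 56*a^5*y^3 + 28*a^6*y^4 + 8*a^7*y^5 + 1*a^8*y^6) := by unfold S8; ring
  unfold A8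
  linear_combination h2 + (vv a y^0*S8 a y^7 + vv a y^1*S8 a y^6 + vv a y^2*S8 a y^5 + vv a y^3*S8 a y^4 + vv a y^4*S8 a y^3 + vv a y^5*S8 a y^2 + vv a y^6*S8 a y^1 + vv a y^7*S8 a y^0) * h
lemma cA8 (a : ℝ) : ContDiff ℝ (⊤ : ℕ∞) (fun p : ℝ × ℝ => A8 a p.2) := by
  unfold A8 S8 vv; fun_prop

def S9 (a y : ℝ) : ℝ := (a*y)^0
def A9 (a y : ℝ) : ℝ := (a^1*y^0 + a^2*y^1 + a^3*y^2 + a^4*y^3 + a^5*y^4 + a^6*y^5 + a^7*y^6 + a^8*y^7) * (vv a y^0*S9 a y^8 + vv a y^1*S9 a y^7 + vv a y^2*S9 a y^6 + vv a y^3*S9 a y^5 + vv a y^4*S9 a y^4 + vv a y^5*S9 a y^3 + vv a y^6*S9 a y^2 + vv a y^7*S9 a y^1 + vv a y^8*S9 a y^0) + (0)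
lemma hA9 (a y : ℝ) : vv a y^9 = 1*(a*y)^0 + y^1 * A9 a y := by
  have h : vv a y - S9 a y = y^1 * (a^1*y^0 + a^2*y^1 + a^3*y^2 + a^4*y^3 + a^5*y^4 + a^6*y^5 + a^7*y^6 + a^8*y^7) := by unfold vv S9; ring
  have h2 : S9 a y^9 = 1*(a*y)^0 + y^1 * (0) := by unfold S9; ring
  unfold A9
  linear_combination h2 + (vv a y^0*S9 a y^8 + vv a y^1*S9 a y^7 + vv a y^2*S9 a y^6 + vv a y^3*S9 a y^5 + vv a y^4*S9 a y^4 + vv a y^5*S9 a y^3 + vv a y^6*S9 a y^2 + vv a y^7*S9 a y^1 + vv a y^8*S9 a y^0) * h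
lemma cA9 (a : ℝ) : ContDiff ℝ (⊤ : ℕ∞) (fun p : ℝ × ℝ => A9 a p.2) := by
  unfold A9 S9 vv; fun_prop

lemma hvv (a y : ℝ) : vv a y * (1 - a * y) = 1 - a^9 * y^9 := by unfold vv; ring

lemma flat_mul {n : ℕ} {g : ℝ × ℝ → ℝ} (hg : ContDiff ℝ (⊤ : ℕ∞) g)
    (h : ∀ i < n, iteratedFDeriv ℝ i g 0 = 0) :
    ∀ i < n + 1, iteratedFDeriv ℝ i (fun p : ℝ × ℝ => p.2 * g p) 0 = 0 := by
  intro m hm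
  have hs : ContDiff ℝ (⊤ : ℕ∞) (fun p : ℝ × ℝ => p.2) := contDiff_snd
  have := norm_iteratedFDeriv_mul_le hs hg (0 : ℝ × ℝ) (n := m) (by exact_mod_cast le_top)
  rw [← norm_le_zero_iff]
  refine this.trans (le_of_eq ?_)
  refine Finset.sum_eq_zero fun i hi => ?_
  rcases Nat.eq_zero_or_pos i with rfl | hpos
  · have : ‖iteratedFDeriv ℝ 0 (fun p : ℝ × ℝ => p.2) 0‖ = 0 := by
      rw [norm_iteratedFDeriv_zero]; simp
    rw [this]; simp
  · have hir := Finset.mem_range.1 hi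
    rw [h (m - i) (by omega)]; simp

lemma flat_pow (n : ℕ) {g : ℝ × ℝ → ℝ} (hg : ContDiff ℝ (⊤ : ℕ∞) g) :
    ∀ i < n, iteratedFDeriv ℝ i (fun p : ℝ × ℝ => p.2 ^ n * g p) 0 = 0 := by
  induction n with
  | zero => intro i hi; omega
  | succ n ih =>
    have := flat_mul (g := fun p : ℝ × ℝ => p.2 ^ n * g p) (by fun_prop) ih
    intro i hi
    rw [← this i hi]
    congr 1
    funext p
    ring

lemma flat_vec (n : ℕ) {g : ℝ × ℝ → ℝ} (hg : ContDiff ℝ (⊤ : ℕ∞) g) (v : ℝ × ℝ) :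
    ∀ i < n, iteratedFDeriv ℝ i (fun p : ℝ × ℝ => (p.2 ^ n * g p) • v) 0 = 0 := by
  intro i hi
  have hc : ContDiff ℝ (⊤ : ℕ∞) (fun p : ℝ × ℝ => p.2 ^ n * g p) := by fun_prop
  have := (((ContinuousLinearMap.id ℝ ℝ).smulRight v).iteratedFDeriv_comp_left
    (hc.contDiffAt (x := 0)) (i := i) (by exact_mod_cast le_top))
  rw [flat_pow n hg i hi] at this
  have e : (⇑((ContinuousLinearMap.id ℝ ℝ).smulRight v) ∘ fun p : ℝ × ℝ => p.2 ^ n * g p)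
      = fun p : ℝ × ℝ => (p.2 ^ n * g p) • v := by
    funext p; simp
  rw [e] at this
  rw [this]
  refine ContinuousMultilinearMap.ext fun m => ?_
  simp [ContinuousLinearMap.compContinuousMultilinearMap_coe]

lemma pderiv_zero {q : ℝ × ℝ → ℝ} (hq : DifferentiableAt ℝ q 0) (h0 : q 0 = 0) :
    HasFDerivAt (fun p : ℝ × ℝ => p.2 * q p) (0 : ℝ × ℝ →L[ℝ] ℝ) 0 := by
  have := (hasFDerivAt_snd (𝕜 := ℝ) (p := (0 : ℝ × ℝ))).mul hq.hasFDerivAt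
  refine HasFDerivAt.congr_fderiv this ?_
  ext <;> simp [h0]

lemma pderiv_id {q r : ℝ × ℝ → ℝ} (hq : DifferentiableAt ℝ q 0) (h0 : q 0 = 0)
    (hr : DifferentiableAt ℝ r 0) (hr0 : r 0 = 0) :
    HasFDerivAt (fun p : ℝ × ℝ => (p.1 + p.2 * q p, p.2 + p.2 * r p))
      (ContinuousLinearMap.id ℝ (ℝ × ℝ)) 0 := by
  have := ((hasFDerivAt_fst (𝕜 := ℝ) (p := (0 : ℝ × ℝ))).add (pderiv_zero hq h0)).prodMk
    ((hasFDerivAt_snd (𝕜 := ℝ) (p := (0 : ℝ × ℝ))).add (pderiv_zero hr hr0))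
  refine HasFDerivAt.congr_fderiv this ?_
  ext <;> simp

/-- The second component of the target map divided by `y`. -/
def q1 (a c d e : ℝ) (p : ℝ × ℝ) : ℝ := -a * (p.1 + p.2 ^ 5 + (d - 3 / 5 * c ^ 2) * p.2 ^ 7 +
        (e - 7 / 5 * c * d + 14 / 25 * c ^ 3) * p.2 ^ 8)

def phi (a c d e : ℝ) (p : ℝ × ℝ) : ℝ × ℝ :=
  (p.1 + p.2 * q1 a c d e p, p.2 + p.2 * (vv a p.2 - 1))

def psi (a : ℝ) : ℝ × ℝ →L[ℝ] ℝ × ℝ :=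
  (ContinuousLinearMap.fst ℝ ℝ ℝ + a • ContinuousLinearMap.snd ℝ ℝ ℝ).prod
    (ContinuousLinearMap.snd ℝ ℝ ℝ)

lemma psi_apply (a : ℝ) (p : ℝ × ℝ) : psi a p = (p.1 + a * p.2, p.2) := by simp [psi]

lemma psi_bij (a : ℝ) : Function.Bijective (psi a) := by
  refine Function.bijective_iff_has_inverse.2 ⟨psi (-a), fun p => ?_, fun p => ?_⟩ <;>
  · simp only [psi_apply]; ext <;> simp

/-- The remainder divided by `y^10`. -/
def QQ (a c d e : ℝ) (p : ℝ × ℝ) : ℝ :=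
  -a^9 * p.1 + A6 a p.2 + c * A7 a p.2 + d * A8 a p.2 + e * A9 a p.2
   - ((a^4*p.2^0 + a^5*p.2^1 + a^6*p.2^2 + a^7*p.2^3 + a^8*p.2^4 + a^9*p.2^5) * (1 + (d - 3 / 5 * c ^ 2)*p.2^2 + (e - 7 / 5 * c * d + 14 / 25 * c ^ 3)*p.2^3)
    + (a^2*(d - 3 / 5 * c ^ 2) + a*(e - 7 / 5 * c * d + 14 / 25 * c ^ 3)) + p.2*(a^3*(d - 3 / 5 * c ^ 2) + a^2*(e - 7 / 5 * c * d + 14 / 25 * c ^ 3)) + p.2^2*a^3*(e - 7 / 5 * c * d + 14 / 25 * c ^ 3))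


lemma cQQ (a c d e : ℝ) : ContDiff ℝ (⊤ : ℕ∞) (QQ a c d e) := by
  have := cA6 a
  have := cA7 a
  have := cA8 a
  have := cA9 a
  unfold QQ; fun_prop

lemma key (a c d e x y : ℝ) (hc : c = -5 * a) :
    (x + y * q1 a c d e (x, y)) * (y + y * (vv a y - 1)) + (y + y * (vv a y - 1)) ^ 6
      + c * (y + y * (vv a y - 1)) ^ 7 + d * (y + y * (vv a y - 1)) ^ 8
      + e * (y + y * (vv a y - 1)) ^ 9 =
    (x * y + y ^ 6 + (d - 3 / 5 * c ^ 2) * y ^ 8 +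
        (e - 7 / 5 * c * d + 14 / 25 * c ^ 3) * y ^ 9) + y ^ 10 * QQ a c d e (x, y) := by
  have hu : y + y * (vv a y - 1) = y * vv a y := by ring
  have h1 := hvv a y
  have hv : 1 + a * y * vv a y = vv a y + (a * y)^9 := by linear_combination -h1
  have hv2 : vv a y = 1 + a*y + (a*y)^2 + (a*y)^3
    + y^4 * (a^4 + a^5*y + a^6*y^2 + a^7*y^3 + a^8*y^4) := by unfold vv; ring
  rw [hu]
  simp only [mul_pow, hA6, hA7, hA8, hA9, QQ, q1]
  generalize A6 a y = B6
  generalize A7 a y = B7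
  generalize A8 a y = B8
  generalize A9 a y = B9
  subst hc
  set g8 := d - 3 / 5 * (-5 * a) ^ 2 with h8
  set g9 := e - 7 / 5 * (-5 * a) * d + 14 / 25 * (-5 * a) ^ 3 with h9
  have hd8 : d = g8 + 15 * a^2 := by rw [h8]; ring
  have he9 : e = g9 - 7 * a * d + 70 * a^3 := by rw [h9]; ring
  clear_value g8 g9
  subst he9
  subst hd8
  linear_combination x * y * h1 - (y^6 + g8 * y^8 + g9 * y^9) * (hv + hv2)

lemma cphi (a c d e : ℝ) : ContDiff ℝ (⊤ : ℕ∞) (phi a c d e) := by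
  unfold phi q1 vv; fun_prop

theorem stmt4 (c d e : ℝ) :
    JetEquiv 9 (fun p => (p.1, p.1 * p.2 + p.2 ^ 6 + c * p.2 ^ 7 + d * p.2 ^ 8 + e * p.2 ^ 9))
      (fun p => (p.1, p.1 * p.2 + p.2 ^ 6 + (d - 3 / 5 * c ^ 2) * p.2 ^ 8 +
        (e - 7 / 5 * c * d + 14 / 25 * c ^ 3) * p.2 ^ 9)) := by
  have hφ : HasFDerivAt (phi (-c/5) c d e) (ContinuousLinearMap.id ℝ (ℝ × ℝ)) 0 := by
    refine pderiv_id (q := q1 (-c/5) c d e) (r := fun p => vv (-c/5) p.2 - 1) ?_ ?_ ?_ ?_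
    · unfold q1; fun_prop
    · simp [q1]
    · unfold vv; fun_prop
    · simp [vv]
  refine ⟨phi (-c/5) c d e, psi (-c/5), cphi _ _ _ _, (psi _).contDiff, by simp [phi],
    by simp, ?_, ?_, ?_⟩
  · rw [hφ.fderiv]; exact Function.bijective_id
  · rw [ContinuousLinearMap.fderiv]; exact psi_bij _
  · intro i hi
    set G : ℝ × ℝ → ℝ × ℝ := (fun p => (p.1, p.1 * p.2 + p.2 ^ 6 + (d - 3 / 5 * c ^ 2) * p.2 ^ 8 +
        (e - 7 / 5 * c * d + 14 / 25 * c ^ 3) * p.2 ^ 9)) with hG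
    set R : ℝ × ℝ → ℝ × ℝ := fun p => (p.2 ^ 10 * QQ (-c/5) c d e p) • ((-c/5 : ℝ), (1 : ℝ)) with hR
    have hQ := cQQ (-c/5) c d e
    have cG : ContDiff ℝ (⊤ : ℕ∞) G := by rw [hG]; fun_prop
    have cR : ContDiff ℝ (⊤ : ℕ∞) R := by rw [hR]; fun_prop
    have heq : (psi (-c/5) ∘ (fun p : ℝ × ℝ => (p.1, p.1 * p.2 + p.2 ^ 6 + c * p.2 ^ 7 +
        d * p.2 ^ 8 + e * p.2 ^ 9)) ∘ phi (-c/5) c d e) = G + R := by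
      funext p
      obtain ⟨x, y⟩ := p
      have hk := key (-c/5) c d e x y (by ring)
      simp only [Function.comp_apply, psi_apply, phi, hk, Pi.add_apply, hG, hR]
      ext
      · simp only [q1, Prod.fst_add, Prod.smul_fst, smul_eq_mul]; ring
      · simp only [Prod.snd_add, Prod.smul_snd, smul_eq_mul]; ring
    rw [heq, iteratedFDeriv_add_apply (cG.contDiffAt.of_le (by exact_mod_cast le_top))
      (cR.contDiffAt.of_le (by exact_mod_cast le_top)), flat_vec 10 hQ _ i (by omega), add_zero]
end
end
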